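/- arXiv:1312.6033 — 2 statements merged into one kernel-verified Lean document; each statement's English description precedes it below -/
import Mathlib

section
/- Assume (Σ_n, T, (φ_n)) satisfies property (H*) with Hölder parameter r. Then for every k ∈ ℕ₀, with l_k := n_k + m_{k+n_k}, and all x, y ∈ Σ_{k+l_k}, the dual Ruelle images of Dirac measures satisfy W_k((ℒ^{l_k}_k)*(δ_x), (ℒ^{l_k}_k)*(δ_y)) ≤ s_k, where s_k := 1 − (1 − r^{n_k} α_k) C_{k+n_k}/B_{k+n_k} < 1. -/
open MeasureTheory Real Filter

namespace NSShift

/-- The ambient sequence space `ℕ^ℕ`. -/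
abbrev Seq := ℕ → ℕ

/-- The shift map `T`. -/
def shift (x : Seq) : Seq := fun i => x (i + 1)

/-- Prepend one symbol to a sequence. -/
def cons (a : ℕ) (x : Seq) : Seq := fun i =>
  match i with
  | 0 => a
  | j + 1 => x j

/-- The non-stationary shift space `Σ_n` determined by alphabets `W` and
transition relations `A` (`A n i j` means `α^n_{ij} = 1`). -/
def Sig (W : ℕ → Set ℕ) (A : ℕ → ℕ → ℕ → Prop) (n : ℕ) : Set Seq :=
  {x | (∀ i, x i ∈ W (n + i)) ∧ ∀ i, A (n + i) (x i) (x (i + 1))}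

/-- `x` and `y` agree in their first `k` coordinates (lie in a common `k`-cylinder). -/
def agrees (x y : Seq) (k : ℕ) : Prop := ∀ i < k, x i = y i

open scoped Classical in
/-- The shift metric `d_r(x,y) = r^{min{i : x_i ≠ y_i}}`. -/
noncomputable def dr (r : ℝ) (x y : Seq) : ℝ :=
  if x = y then 0 else r ^ sInf {i | x i ≠ y i}

/-- `f` is locally `(r,m)`-Hölder continuous with Hölder constant `κ` of index `m` on `S`:
`V_k(f) ≤ κ r^k` for all `k ≥ m`. -/
def HolderOn (S : Set Seq) (r κ : ℝ) (m : ℕ) (f : Seq → ℝ) : Prop :=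
  ∀ k, m ≤ k → ∀ x ∈ S, ∀ y ∈ S, agrees x y k → |f x - f y| ≤ κ * r ^ k

/-- The Birkhoff sum `S_n(φ_k) = Σ_{i=0}^{n-1} φ_{k+i} ∘ T^i`. -/
noncomputable def birkhoff (φ : ℕ → Seq → ℝ) (k n : ℕ) (x : Seq) : ℝ :=
  ∑ i ∈ Finset.range n, φ (k + i) (shift^[i] x)

/-- `log B_m = Σ_{i=1}^{m} κ_{m−i} r^i`. -/
noncomputable def logB (κ : ℕ → ℝ) (r : ℝ) (m : ℕ) : ℝ :=
  ∑ i ∈ Finset.Icc 1 m, κ (m - i) * r ^ i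

/-- `B_m = exp Σ_{i=1}^{m} κ_{m−i} r^i`. -/
noncomputable def Bconst (κ : ℕ → ℝ) (r : ℝ) (m : ℕ) : ℝ := Real.exp (logB κ r m)


open scoped Classical in
/-- The Ruelle operator `ℒ_k(f)(x) = Σ_{Ty=x} e^{φ_k(y)} f(y)`, for `x ∈ Σ_{k+1}`. -/
noncomputable def Ruelle (W : ℕ → Set ℕ) (A : ℕ → ℕ → ℕ → Prop) (φ : ℕ → Seq → ℝ)
    (k : ℕ) (f : Seq → ℝ) (x : Seq) : ℝ :=
  ∑' a : ℕ, if cons a x ∈ Sig W A k then Real.exp (φ k (cons a x)) * f (cons a x) else 0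

/-- The iterated Ruelle operator `ℒ^n_k = ℒ_{k+n-1} ∘ ⋯ ∘ ℒ_k`. -/
noncomputable def RuelleIter (W : ℕ → Set ℕ) (A : ℕ → ℕ → ℕ → Prop) (φ : ℕ → Seq → ℝ)
    (k : ℕ) : ℕ → (Seq → ℝ) → Seq → ℝ
  | 0 => fun f => f
  | n + 1 => fun f => Ruelle W A φ (k + n) (RuelleIter W A φ k n f)

/-- `w` is a `k`-admissible word of length `len`. -/
def Adm (W : ℕ → Set ℕ) (A : ℕ → ℕ → ℕ → Prop) (k : ℕ) (w : ℕ → ℕ) (len : ℕ) : Prop :=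
  (∀ i < len, w i ∈ W (k + i)) ∧ ∀ i, i + 1 < len → A (k + i) (w i) (w (i + 1))

/-- Prepend the first `len` symbols of `w` to the sequence `x` (the inverse branch `τ_w`). -/
def prepend (w : ℕ → ℕ) (len : ℕ) (x : Seq) : Seq := fun i =>
  if i < len then w i else x (i - len)

/-- The Lipschitz constant of `f` on `S` with respect to the distance function `d`,
as the least constant `K ≥ 0` with `|f x − f y| ≤ K d(x,y)` on `S`. -/
noncomputable def LipC (S : Set Seq) (d : Seq → Seq → ℝ) (f : Seq → ℝ) : ℝ :=
  sInf {K : ℝ | 0 ≤ K ∧ ∀ x ∈ S, ∀ y ∈ S, |f x - f y| ≤ K * d x y}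

/-- The Vasershtein (Wasserstein) distance of two Borel measures with respect to the
cost function `d`, as the infimum of `∫ d dm` over couplings `m`. -/
noncomputable def Wass (d : Seq → Seq → ℝ) (μ ν : Measure Seq) : ℝ :=
  sInf {t : ℝ | ∃ m : Measure (Seq × Seq),
    m.map Prod.fst = μ ∧ m.map Prod.snd = ν ∧ t = ∫ p, d p.1 p.2 ∂m}

/-- The dual Ruelle operator `ℒ^*_k` on Borel measures, satisfying
`∫ f d(ℒ^*_k μ) = ∫ ℒ_k(f) dμ`. -/
noncomputable def dualRuelle (W : ℕ → Set ℕ) (A : ℕ → ℕ → ℕ → Prop) (φ : ℕ → Seq → ℝ)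
    (k : ℕ) (μ : Measure Seq) : Measure Seq :=
  Measure.sum fun a : ℕ =>
    (μ.withDensity fun x =>
      ENNReal.ofReal ((Sig W A k).indicator (fun y => Real.exp (φ k y)) (cons a x))).map (cons a)

/-- The iterated dual operator `(ℒ^n_k)^* = ℒ^*_k ∘ ⋯ ∘ ℒ^*_{k+n-1}`. -/
noncomputable def dualRuelleIter (W : ℕ → Set ℕ) (A : ℕ → ℕ → ℕ → Prop) (φ : ℕ → Seq → ℝ) :
    (k : ℕ) → ℕ → Measure Seq → Measure Seq
  | _, 0, μ => μ
  | k, n + 1, μ => dualRuelle W A φ k (dualRuelleIter W A φ (k + 1) n μ)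

/-- A non-stationary shift space `((Σ_n), T, (φ_n))` satisfying property `(H*)`, together
with the choices of the constants `β`, `n_k`, base letters `o_k`, mixing times `m_k`,
connecting words `u(x)` and lower bounds `C_k` used in the coupling construction. -/
structure HstarSystem where
  /-- the alphabets `𝒲¹_n` -/
  W : ℕ → Set ℕ
  /-- the transition matrices: `A n i j` iff `α^n_{ij} = 1` -/
  A : ℕ → ℕ → ℕ → Prop
  /-- the potentials `φ_n : Σ_n → ℝ` -/
  φ : ℕ → Seq → ℝ
  /-- the Hölder parameter -/
  r : ℝ
  /-- the parameter `β ∈ (0,1)` -/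
  β : ℝ
  /-- the Hölder constants `κ_n` of `φ_n` -/
  κ : ℕ → ℝ
  /-- the finite set `ℐ` from the big preimages property -/
  I : Finset ℕ
  /-- the infinite set `𝒦` from the big preimages property -/
  K : Set ℕ
  /-- the base letters `o_k ∈ 𝒲¹_k` -/
  o : ℕ → ℕ
  /-- the integers `n_k` -/
  nseq : ℕ → ℕ
  /-- the mixing times `m_k` -/
  mseq : ℕ → ℕ
  /-- the connecting words `u(x) ∈ 𝒲^{m_k}_k` (as sequences; only the first `m_k`
  symbols are relevant) -/
  u : ℕ → Seq → Seq
  /-- the constants `C_k` -/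
  Cseq : ℕ → ℝ
  hr : 0 < r ∧ r < 1
  hβ : 0 < β ∧ β < 1
  κnonneg : ∀ n, 0 ≤ κ n
  hKinf : K.Infinite
  /-- no zero rows -/
  row : ∀ n, ∀ i ∈ W n, ∃ j ∈ W (n + 1), A n i j
  /-- no zero columns -/
  col : ∀ n, ∀ i ∈ W (n + 1), ∃ j ∈ W n, A n j i
  /-- topological mixing -/
  mixing : ∀ k : ℕ, ∀ a ∈ W k, ∀ b : ℕ, ∃ N : ℕ, ∀ n, N ≤ n → b ∈ W (k + n) →
    ∃ x ∈ Sig W A k, x 0 = a ∧ x n = b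
  /-- big preimages along `𝒦` -/
  bigPre : ∀ n ∈ K, 1 ≤ n → ∀ a ∈ W n, ∃ b ∈ I, (b : ℕ) ∈ W (n - 1) ∧ A (n - 1) b a
  /-- `ℒ_n(1) = 1` -/
  normalized : ∀ k, ∀ x ∈ Sig W A (k + 1), Ruelle W A φ k (fun _ => 1) x = 1
  /-- `φ_n` is locally `(r,2)`-Hölder for `n ∉ 𝒦` -/
  holder2 : ∀ n ∉ K, HolderOn (Sig W A n) r (κ n) 2 (φ n)
  /-- `φ_n` is locally `(r,1)`-Hölder for `n ∈ 𝒦` -/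
  holder1 : ∀ n ∈ K, HolderOn (Sig W A n) r (κ n) 1 (φ n)
  ho : ∀ k, o k ∈ W k
  /-- `n_k ≥ ⌊−log α_k / log r⌋ + 1` where `α_k = B_k/β` -/
  hn : ∀ k, (⌊-Real.log (Bconst κ r k / β) / Real.log r⌋ + 1 : ℤ) ≤ (nseq k : ℤ)
  /-- `m_k ≥ 1`, `k + m_k ∈ 𝒦` -/
  hm_mem : ∀ k, 1 ≤ mseq k ∧ k + mseq k ∈ K
  /-- `(A_k ⋯ A_{k+m_k−2})_{o_k j} ≥ 1` for all `j ∈ ℐ ∩ 𝒲¹_{k+m_k−1}` -/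
  hm_conn : ∀ k, ∀ j ∈ I, (j : ℕ) ∈ W (k + mseq k - 1) →
    ∃ w : ℕ → ℕ, Adm W A k w (mseq k) ∧ w 0 = o k ∧ w (mseq k - 1) = j
  /-- minimality of `m_k` -/
  hm_min : ∀ k n, (1 ≤ n ∧ k + n ∈ K ∧ ∀ j ∈ I, (j : ℕ) ∈ W (k + n - 1) →
      ∃ w : ℕ → ℕ, Adm W A k w n ∧ w 0 = o k ∧ w (n - 1) = j) → mseq k ≤ n
  /-- the connecting word `u(x)` starts at `o_k`, ends in `ℐ`, and
  `x ∈ T^{m_k}([u(x)]_k)` -/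
  hu : ∀ k, ∀ x ∈ Sig W A (k + mseq k), prepend (u k x) (mseq k) x ∈ Sig W A k ∧
    u k x 0 = o k ∧ u k x (mseq k - 1) ∈ I
  hC_pos : ∀ k, 0 < Cseq k
  /-- `C_k` is a lower bound for `e^{S_{m_k} φ_k (τ_{u(x)} x)}` -/
  hC_le : ∀ k, ∀ x ∈ Sig W A (k + mseq k),
    Cseq k ≤ Real.exp (birkhoff φ k (mseq k) (prepend (u k x) (mseq k) x))

namespace HstarSystem

variable (S : HstarSystem)

/-- `α_k := B_k / β`. -/
noncomputable def alphaC (k : ℕ) : ℝ := Bconst S.κ S.r k / S.β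

/-- the metric `d̄_k(x,y) := min{1, α_k d_r(x,y)}`. -/
noncomputable def dbar (k : ℕ) (x y : Seq) : ℝ := min 1 (S.alphaC k * dr S.r x y)

/-- `s_k := 1 − (1 − r^{n_k} α_k) C_{k+n_k}/B_{k+n_k}`. -/
noncomputable def sconst (k : ℕ) : ℝ :=
  1 - (1 - S.r ^ S.nseq k * S.alphaC k) * S.Cseq (k + S.nseq k) / Bconst S.κ S.r (k + S.nseq k)

/-- `t_k := max{β, s_k}`. -/
noncomputable def tconst (k : ℕ) : ℝ := max S.β (S.sconst k)

/-- `l_k := n_k + m_{k+n_k}`. -/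
def lconst (k : ℕ) : ℕ := S.nseq k + S.mseq (k + S.nseq k)

end HstarSystem

/-!
For a word `w` of length `n` write `wx` for the sequence `x` prolonged by `w` on the left. Then
`(ℒ^n_k)^* δ_x = ∑_w e^{S_n φ_k(wx)} δ_{wx}`, the sum being over the words with `wx ∈ Σ_k`.
Keeping only the connecting word `u(x)` shows that `(ℒ^{l_k}_k)^* δ_x` dominates
`C_{k+n_k} (ℒ^{n_k}_k)^* δ_z` with `z = u(x)x`, and likewise for `y` and `z' = u(y)y`. As `z` and
`z'` both start with `o_{k+n_k}`, the same words `w` of length `n_k` may precede them, and bounded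
distortion bounds the ratio of the weights of `wz` and `wz'` by `B_{k+n_k}`. So a mass
`C_{k+n_k} / B_{k+n_k}` can be moved between the points `wz` and `wz'`, which are at distance at
most `r^{n_k} α_k`, and the rest is moved at cost at most `1`.
-/

theorem smul_measure_sum {α ι : Type*} [MeasurableSpace α] (c : ENNReal) (μ : ι → Measure α) :
    c • Measure.sum μ = Measure.sum fun i => c • μ i := by
  ext s hs
  simp [Measure.sum_apply _ hs, ENNReal.tsum_mul_left]

theorem measure_sum_mono {α ι : Type*} [MeasurableSpace α] {μ ν : ι → Measure α}
    (h : ∀ i, μ i ≤ ν i) : Measure.sum μ ≤ Measure.sum ν := by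
  refine Measure.le_iff.2 fun s hs => ?_
  simp only [Measure.sum_apply _ hs]
  exact ENNReal.tsum_le_tsum fun i => h i s

section Coupling

variable {α β : Type*} [MeasurableSpace α] [MeasurableSpace β] {μ : Measure α} {ν : Measure β}

theorem exists_coupling_of_measure_univ_eq [IsFiniteMeasure μ] [IsFiniteMeasure ν]
    (h : μ Set.univ = ν Set.univ) : ∃ m : Measure (α × β), m.fst = μ ∧ m.snd = ν := by
  rcases eq_or_ne (μ Set.univ) 0 with h0 | h0
  · obtain rfl : μ = 0 := Measure.measure_univ_eq_zero.1 h0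
    obtain rfl : ν = 0 := Measure.measure_univ_eq_zero.1 (h ▸ h0)
    exact ⟨0, Measure.fst_zero, Measure.snd_zero⟩
  · have hinv : (μ Set.univ)⁻¹ * μ Set.univ = 1 := ENNReal.inv_mul_cancel h0 (by finiteness)
    refine ⟨(μ Set.univ)⁻¹ • μ.prod ν, ?_, ?_⟩
    · rw [Measure.fst, Measure.map_smul, Measure.map_fst_prod, ← h, smul_smul, hinv, one_smul]
    · rw [Measure.snd, Measure.map_smul, Measure.map_snd_prod, smul_smul, hinv, one_smul]

theorem exists_coupling_add_of_fst_le_of_snd_le [IsProbabilityMeasure μ] [IsProbabilityMeasure ν]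
    {m : Measure (α × β)} (hμ : m.fst ≤ μ) (hν : m.snd ≤ ν) :
    ∃ ρ : Measure (α × β), (m + ρ).fst = μ ∧ (m + ρ).snd = ν := by
  have : IsFiniteMeasure m.fst := isFiniteMeasure_of_le μ hμ
  have : IsFiniteMeasure m.snd := isFiniteMeasure_of_le ν hν
  obtain ⟨ρ, hfst, hsnd⟩ :=
      exists_coupling_of_measure_univ_eq (μ := μ - m.fst) (ν := ν - m.snd) <| by
    rw [Measure.sub_apply .univ hμ, Measure.sub_apply .univ hν, Measure.fst_univ,
      Measure.snd_univ, measure_univ (μ := μ), measure_univ (μ := ν)]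
  refine ⟨ρ, ?_, ?_⟩
  · rw [Measure.fst_add, hfst, add_comm, Measure.sub_add_cancel_of_le hμ]
  · rw [Measure.snd_add, hsnd, add_comm, Measure.sub_add_cancel_of_le hν]

end Coupling

section Wasserstein

variable {d : Seq → Seq → ℝ} {μ ν : Measure Seq}

theorem Wass_le_integral (hd : ∀ x y, 0 ≤ d x y) {m : Measure (Seq × Seq)} (hfst : m.fst = μ)
    (hsnd : m.snd = ν) : Wass d μ ν ≤ ∫ p, d p.1 p.2 ∂m := by
  refine csInf_le ⟨0, ?_⟩ ⟨m, hfst, hsnd, rfl⟩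
  rintro _ ⟨m', -, -, rfl⟩
  exact integral_nonneg fun p => hd p.1 p.2

theorem Wass_le_of_fst_le_of_snd_le [IsProbabilityMeasure μ] [IsProbabilityMeasure ν]
    (hd0 : ∀ x y, 0 ≤ d x y) (hd1 : ∀ x y, d x y ≤ 1) {m : Measure (Seq × Seq)}
    (hμ : m.fst ≤ μ) (hν : m.snd ≤ ν) {ε : ℝ} (hε : 0 ≤ ε) (hdε : ∀ᵐ p ∂m, d p.1 p.2 ≤ ε) :
    Wass d μ ν ≤ 1 - (1 - ε) * m.real Set.univ := by
  obtain ⟨ρ, hfst, hsnd⟩ := exists_coupling_add_of_fst_le_of_snd_le hμ hν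
  have hmass : (m + ρ) Set.univ = 1 := by rw [← Measure.fst_univ, hfst, measure_univ]
  have : IsProbabilityMeasure (m + ρ) := ⟨hmass⟩
  have : IsFiniteMeasure m := isFiniteMeasure_of_le (m + ρ) (Measure.le_add_right le_rfl)
  have : IsFiniteMeasure ρ := isFiniteMeasure_of_le (m + ρ) (Measure.le_add_left le_rfl)
  have hreal : m.real Set.univ + ρ.real Set.univ = 1 := by
    rw [← measureReal_add_apply, measureReal_def, hmass, ENNReal.toReal_one]
  have hm : ∫⁻ p, ENNReal.ofReal ‖d p.1 p.2‖ ∂m ≤ ENNReal.ofReal ε * m Set.univ := by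
    rw [← lintegral_const]
    refine lintegral_mono_ae (hdε.mono fun p hp => ENNReal.ofReal_le_ofReal ?_)
    rwa [Real.norm_of_nonneg (hd0 p.1 p.2)]
  have hρ : ∫⁻ p, ENNReal.ofReal ‖d p.1 p.2‖ ∂ρ ≤ ρ Set.univ := by
    rw [← lintegral_one]
    refine lintegral_mono fun p => ENNReal.ofReal_le_one.2 ?_
    rw [Real.norm_of_nonneg (hd0 p.1 p.2)]
    exact hd1 p.1 p.2
  -- The lower integral is additive in the measure even where `d` is not measurable.
  calc Wass d μ ν ≤ ∫ p, d p.1 p.2 ∂(m + ρ) := Wass_le_integral hd0 hfst hsnd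
    _ ≤ (∫⁻ p, ENNReal.ofReal ‖d p.1 p.2‖ ∂(m + ρ)).toReal :=
        (Real.le_norm_self _).trans (norm_integral_le_lintegral_norm _)
    _ ≤ (ENNReal.ofReal ε * m Set.univ + ρ Set.univ).toReal := by
        rw [lintegral_add_measure]
        exact ENNReal.toReal_mono (by finiteness) (add_le_add hm hρ)
    _ = ε * m.real Set.univ + ρ.real Set.univ := by
        rw [ENNReal.toReal_add (by finiteness) (by finiteness), ENNReal.toReal_mul,
          ENNReal.toReal_ofReal hε, measureReal_def, measureReal_def]
    _ = 1 - (1 - ε) * m.real Set.univ := by linarith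

end Wasserstein

section Sequences

theorem dr_nonneg {r : ℝ} (hr : 0 ≤ r) (x y : Seq) : 0 ≤ dr r x y := by
  unfold dr
  split_ifs
  exacts [le_rfl, pow_nonneg hr _]

theorem dr_le_pow_of_agrees {r : ℝ} (hr0 : 0 ≤ r) (hr1 : r ≤ 1) {x y : Seq} {n : ℕ}
    (h : agrees x y n) : dr r x y ≤ r ^ n := by
  unfold dr
  split_ifs with hxy
  · exact pow_nonneg hr0 n
  · refine pow_le_pow_of_le_one hr0 hr1 (le_csInf (Function.ne_iff.1 hxy) fun i hi => ?_)
    exact not_lt.1 fun hin => hi (h i hin)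

theorem cons_zero_shift (x : Seq) : cons (x 0) (shift x) = x := by
  funext i
  cases i <;> rfl

theorem measurable_cons (a : ℕ) : Measurable (cons a) := by
  refine measurable_pi_lambda _ fun i => ?_
  cases i with
  | zero => exact measurable_const
  | succ i => exact measurable_pi_apply i

theorem shift_iterate_apply (n : ℕ) (x : Seq) (i : ℕ) : shift^[n] x i = x (i + n) := by
  induction n generalizing x with
  | zero => rfl
  | succ n ih => rw [Function.iterate_succ_apply, ih, shift, add_assoc]

theorem shift_iterate_prepend (w : ℕ → ℕ) (n : ℕ) (x : Seq) : shift^[n] (prepend w n x) = x := by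
  funext i
  simp [shift_iterate_apply, prepend]

theorem agrees_shift_iterate {x y : Seq} {n i : ℕ} (h : agrees x y (n + i)) :
    agrees (shift^[i] x) (shift^[i] y) n := by
  intro j hj
  simpa only [shift_iterate_apply] using h (j + i) (by lia)

/-- The inverse branch `τ_w`, with the word `w` of length `n` given as a tuple, so that the words
of a given length form a countable type. -/
def branch : {n : ℕ} → (Fin n → ℕ) → Seq → Seq
  | 0, _, x => x
  | _ + 1, w, x => cons (w 0) (branch (Fin.tail w) x)

theorem shift_iterate_branch {n : ℕ} (w : Fin n → ℕ) (x : Seq) : shift^[n] (branch w x) = x := by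
  induction n with
  | zero => rfl
  | succ n ih => exact ih (Fin.tail w)

theorem branch_shift_iterate (n : ℕ) (x : Seq) :
    branch (fun i : Fin n => x i) (shift^[n] x) = x := by
  induction n generalizing x with
  | zero => rfl
  | succ n ih => exact (congrArg (cons (x 0)) (ih (shift x))).trans (cons_zero_shift x)

theorem agrees_branch {n j : ℕ} (w : Fin n → ℕ) {x y : Seq} (h : agrees x y j) :
    agrees (branch w x) (branch w y) (j + n) := by
  induction n with
  | zero => exact h
  | succ n ih =>
    intro i hi
    cases i with
    | zero => rfl
    | succ i => exact ih (Fin.tail w) i (by lia)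

end Sequences

section ShiftSpace

variable {W : ℕ → Set ℕ} {A : ℕ → ℕ → ℕ → Prop} {k n : ℕ} {x y : Seq}

theorem shift_mem_Sig (hx : x ∈ Sig W A k) : shift x ∈ Sig W A (k + 1) := by
  refine ⟨fun i => ?_, fun i => ?_⟩
  · simpa only [shift, add_assoc, add_comm 1 i] using hx.1 (i + 1)
  · simpa only [shift, add_assoc, add_comm 1 i] using hx.2 (i + 1)

theorem shift_iterate_mem_Sig (hx : x ∈ Sig W A k) : shift^[n] x ∈ Sig W A (k + n) := by
  induction n with
  | zero => exact hx
  | succ n ih =>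
    rw [Function.iterate_succ_apply']
    exact shift_mem_Sig ih

theorem mem_Sig_of_agrees (h : agrees x y (1 + n)) (hx : x ∈ Sig W A k)
    (hy : shift^[n] y ∈ Sig W A (k + n)) : y ∈ Sig W A k := by
  refine ⟨fun i => ?_, fun i => ?_⟩ <;> rcases lt_or_ge i n with hi | hi
  · exact h i (by lia) ▸ hx.1 i
  · simpa [shift_iterate_apply, hi, add_assoc] using hy.1 (i - n)
  · exact h i (by lia) ▸ h (i + 1) (by lia) ▸ hx.2 i
  · simpa [shift_iterate_apply, hi, add_assoc, add_right_comm _ 1 n] using hy.2 (i - n)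

end ShiftSpace

section Distortion

theorem HolderOn.anti_index {S : Set Seq} {r κ : ℝ} {m m' : ℕ} {f : Seq → ℝ}
    (hf : HolderOn S r κ m f) (hm : m ≤ m') : HolderOn S r κ m' f :=
  fun k hk => hf k (hm.trans hk)

theorem logB_eq_sum_range (κ : ℕ → ℝ) (r : ℝ) (m : ℕ) :
    logB κ r m = ∑ i ∈ Finset.range m, κ i * r ^ (m - i) := by
  refine Finset.sum_bij' (fun i _ => m - i) (fun i _ => m - i) ?_ ?_ ?_ ?_ ?_ <;> intro i hi <;>
    simp only [Finset.mem_Icc, Finset.mem_range] at hi ⊢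
  case refine_5 => rw [Nat.sub_sub_self hi.2]
  all_goals lia

theorem one_le_Bconst {κ : ℕ → ℝ} {r : ℝ} (hκ : ∀ i, 0 ≤ κ i) (hr : 0 ≤ r) (m : ℕ) :
    1 ≤ Bconst κ r m :=
  Real.one_le_exp (Finset.sum_nonneg fun _ _ => mul_nonneg (hκ _) (pow_nonneg hr _))

variable {W : ℕ → Set ℕ} {A : ℕ → ℕ → ℕ → Prop} {φ : ℕ → Seq → ℝ} {κ : ℕ → ℝ} {r : ℝ}

theorem abs_birkhoff_sub_birkhoff_le_logB (hr0 : 0 ≤ r) (hr1 : r ≤ 1) (hκ : ∀ i, 0 ≤ κ i)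
    (hφ : ∀ i, HolderOn (Sig W A i) r (κ i) 2 (φ i)) {k n : ℕ} {x y : Seq}
    (hx : x ∈ Sig W A k) (hy : y ∈ Sig W A k) (h : agrees x y (1 + n)) :
    |birkhoff φ k n x - birkhoff φ k n y| ≤ logB κ r (k + n) := by
  have hterm : ∀ i ∈ Finset.range n,
      |φ (k + i) (shift^[i] x) - φ (k + i) (shift^[i] y)| ≤
        κ (k + i) * r ^ (k + n - (k + i)) := by
    intro i hi
    have hin := Finset.mem_range.1 hi
    have hagree : agrees (shift^[i] x) (shift^[i] y) (n - i + 1) :=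
      agrees_shift_iterate (by rwa [show n - i + 1 + i = 1 + n by lia])
    calc |φ (k + i) (shift^[i] x) - φ (k + i) (shift^[i] y)| ≤ κ (k + i) * r ^ (n - i + 1) :=
          hφ (k + i) _ (by lia) _ (shift_iterate_mem_Sig hx) _ (shift_iterate_mem_Sig hy) hagree
      _ ≤ κ (k + i) * r ^ (k + n - (k + i)) :=
          mul_le_mul_of_nonneg_left (pow_le_pow_of_le_one hr0 hr1 (by lia)) (hκ _)
  calc |birkhoff φ k n x - birkhoff φ k n y|
      ≤ ∑ i ∈ Finset.range n, |φ (k + i) (shift^[i] x) - φ (k + i) (shift^[i] y)| := by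
        rw [birkhoff, birkhoff, ← Finset.sum_sub_distrib]
        exact Finset.abs_sum_le_sum_abs _ _
    _ ≤ ∑ i ∈ Finset.range n, κ (k + i) * r ^ (k + n - (k + i)) := Finset.sum_le_sum hterm
    _ ≤ logB κ r (k + n) := by
        rw [logB_eq_sum_range, Finset.sum_range_add]
        exact le_add_of_nonneg_left
          (Finset.sum_nonneg fun _ _ => mul_nonneg (hκ _) (pow_nonneg hr0 _))

end Distortion

section DualRuelle

variable (W : ℕ → Set ℕ) (A : ℕ → ℕ → ℕ → Prop) (φ : ℕ → Seq → ℝ)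

/-- The weight `e^{S_n φ_k(x)}` of the point `x` in `(ℒ^n_k)^* δ_{T^n x}`, equal to `0` for
`x ∉ Σ_k`. -/
noncomputable def weight (k n : ℕ) (x : Seq) : ENNReal :=
  (Sig W A k).indicator (fun z => ENNReal.ofReal (Real.exp (birkhoff φ k n z))) x

variable {W A φ}

theorem birkhoff_succ (k n : ℕ) (x : Seq) :
    birkhoff φ k (n + 1) x = birkhoff φ k 1 x + birkhoff φ (k + 1) n (shift x) := by
  have htail : birkhoff φ (k + 1) n (shift x) =
      ∑ i ∈ Finset.range n, φ (k + (i + 1)) (shift^[i + 1] x) :=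
    Finset.sum_congr rfl fun i _ => by rw [add_comm i, ← add_assoc, add_comm 1 i]; rfl
  rw [htail, birkhoff, birkhoff, Finset.sum_range_succ', Finset.sum_range_one, add_comm]

theorem weight_succ (k n : ℕ) (x : Seq) :
    weight W A φ k (n + 1) x = weight W A φ (k + 1) n (shift x) * weight W A φ k 1 x := by
  by_cases hx : x ∈ Sig W A k
  · simp only [weight, Set.indicator_of_mem hx, Set.indicator_of_mem (shift_mem_Sig hx)]
    rw [← ENNReal.ofReal_mul (Real.exp_nonneg _), ← Real.exp_add, birkhoff_succ, add_comm]
  · simp [weight, hx]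

theorem weight_le_Bconst_mul_weight {κ : ℕ → ℝ} {r : ℝ} (hr0 : 0 ≤ r) (hr1 : r ≤ 1)
    (hκ : ∀ i, 0 ≤ κ i) (hφ : ∀ i, HolderOn (Sig W A i) r (κ i) 2 (φ i)) {k n : ℕ} {x y : Seq}
    (h : agrees x y (1 + n)) (hy : shift^[n] y ∈ Sig W A (k + n)) :
    weight W A φ k n x ≤ ENNReal.ofReal (Bconst κ r (k + n)) * weight W A φ k n y := by
  by_cases hx : x ∈ Sig W A k
  · have hy' : y ∈ Sig W A k := mem_Sig_of_agrees h hx hy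
    have hdist := abs_birkhoff_sub_birkhoff_le_logB hr0 hr1 hκ hφ hx hy' h
    simp only [weight, Set.indicator_of_mem hx, Set.indicator_of_mem hy', Bconst]
    rw [← ENNReal.ofReal_mul (Real.exp_nonneg _), ← Real.exp_add]
    gcongr
    linarith [le_abs_self (birkhoff φ k n x - birkhoff φ k n y)]
  · simp [weight, hx]

theorem dualRuelle_sum {ι : Type*} (k : ℕ) (μ : ι → Measure Seq) :
    dualRuelle W A φ k (Measure.sum μ) = Measure.sum fun i => dualRuelle W A φ k (μ i) := by
  simp only [dualRuelle, withDensity_sum]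
  rw [Measure.sum_comm]
  congr 1 with a : 1
  exact Measure.map_sum (measurable_cons a).aemeasurable

theorem dualRuelle_smul (k : ℕ) (c : ENNReal) (μ : Measure Seq) :
    dualRuelle W A φ k (c • μ) = c • dualRuelle W A φ k μ := by
  simp only [dualRuelle, withDensity_smul_measure, Measure.map_smul, smul_measure_sum]

theorem dualRuelle_dirac (k : ℕ) (x : Seq) :
    dualRuelle W A φ k (Measure.dirac x) =
      Measure.sum fun a => weight W A φ k 1 (cons a x) • Measure.dirac (cons a x) := by
  rw [dualRuelle]
  congr 1 with a : 1
  rw [dirac_withDensity, Measure.map_smul, Measure.map_dirac' (measurable_cons a)]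
  congr 1
  by_cases hx : cons a x ∈ Sig W A k <;> simp [weight, birkhoff, hx]

theorem dualRuelleIter_sum {ι : Type*} (k n : ℕ) (μ : ι → Measure Seq) :
    dualRuelleIter W A φ k n (Measure.sum μ) =
      Measure.sum fun i => dualRuelleIter W A φ k n (μ i) := by
  induction n generalizing k with
  | zero => rfl
  | succ n ih => simp only [dualRuelleIter, ih, dualRuelle_sum]

theorem dualRuelleIter_smul (k n : ℕ) (c : ENNReal) (μ : Measure Seq) :
    dualRuelleIter W A φ k n (c • μ) = c • dualRuelleIter W A φ k n μ := by
  induction n generalizing k with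
  | zero => rfl
  | succ n ih => simp only [dualRuelleIter, ih, dualRuelle_smul]

theorem dualRuelleIter_add (k n m : ℕ) (μ : Measure Seq) :
    dualRuelleIter W A φ k (n + m) μ =
      dualRuelleIter W A φ k n (dualRuelleIter W A φ (k + n) m μ) := by
  induction n generalizing k with
  | zero => simp only [dualRuelleIter, zero_add, add_zero]
  | succ n ih =>
    rw [add_right_comm, dualRuelleIter, dualRuelleIter, ih, add_right_comm, add_assoc k]

theorem dualRuelleIter_dirac {k n : ℕ} {x : Seq} (hx : x ∈ Sig W A (k + n)) :
    dualRuelleIter W A φ k n (Measure.dirac x) = Measure.sum fun w : Fin n → ℕ =>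
      weight W A φ k n (branch w x) • Measure.dirac (branch w x) := by
  induction n generalizing k with
  | zero =>
    have hx' : x ∈ Sig W A k := hx
    simp [dualRuelleIter, Measure.sum_fintype, branch, weight, birkhoff, hx']
  | succ n ih =>
    have hx' : x ∈ Sig W A (k + 1 + n) := by rwa [add_right_comm, add_assoc]
    rw [dualRuelleIter, ih hx', dualRuelle_sum, ← Measure.sum_comp_equiv (Fin.consEquiv fun _ => ℕ),
      ← Measure.sum_comp_equiv (Equiv.prodComm _ _)]
    simp only [dualRuelle_smul, dualRuelle_dirac, smul_measure_sum, smul_smul, Measure.sum_sum]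
    congr 1 with p : 1
    exact congrArg (· • _) (weight_succ k n (cons p.2 (branch p.1 x))).symm

theorem weight_smul_dualRuelleIter_dirac_le {k n m : ℕ} {x : Seq} (hx : x ∈ Sig W A (k + n)) :
    weight W A φ (k + n) m x • dualRuelleIter W A φ k n (Measure.dirac x) ≤
      dualRuelleIter W A φ k (n + m) (Measure.dirac (shift^[m] x)) := by
  have hle := Measure.le_sum (fun w : Fin m → ℕ =>
    weight W A φ (k + n) m (branch w (shift^[m] x)) •
      dualRuelleIter W A φ k n (Measure.dirac (branch w (shift^[m] x)))) fun i => x i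
  simpa only [branch_shift_iterate, dualRuelleIter_add, dualRuelleIter_sum, dualRuelleIter_smul,
    dualRuelleIter_dirac (shift_iterate_mem_Sig hx)] using hle

theorem tsum_weight_cons {k : ℕ} {x : Seq} (h : Ruelle W A φ k (fun _ => 1) x = 1) :
    ∑' a, weight W A φ k 1 (cons a x) = 1 := by
  let g : ℕ → ℝ := fun a => (Sig W A k).indicator (fun z => Real.exp (φ k z)) (cons a x)
  have hg : ∑' a, g a = 1 := by
    simpa only [Ruelle, mul_one, g, Set.indicator] using h
  have hsum : Summable g := by
    by_contra hg'
    exact zero_ne_one ((tsum_eq_zero_of_not_summable hg').symm.trans hg)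
  calc ∑' a, weight W A φ k 1 (cons a x) = ∑' a, ENNReal.ofReal (g a) := by
        refine tsum_congr fun a => ?_
        by_cases ha : cons a x ∈ Sig W A k <;> simp [weight, birkhoff, g, ha]
    _ = ENNReal.ofReal (∑' a, g a) :=
        (ENNReal.ofReal_tsum_of_nonneg
          (fun a => Set.indicator_nonneg (fun _ _ => Real.exp_nonneg _) _) hsum).symm
    _ = 1 := by rw [hg, ENNReal.ofReal_one]

theorem isProbabilityMeasure_dualRuelleIter_dirac
    (hnorm : ∀ i, ∀ x ∈ Sig W A (i + 1), Ruelle W A φ i (fun _ => 1) x = 1) {k n : ℕ} {x : Seq}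
    (hx : x ∈ Sig W A (k + n)) :
    IsProbabilityMeasure (dualRuelleIter W A φ k n (Measure.dirac x)) := by
  refine ⟨?_⟩
  induction n generalizing x with
  | zero => exact measure_univ (μ := Measure.dirac x)
  | succ n ih =>
    have hterm (a : ℕ) : (dualRuelleIter W A φ k n
        (weight W A φ (k + n) 1 (cons a x) • Measure.dirac (cons a x))) Set.univ =
          weight W A φ (k + n) 1 (cons a x) := by
      by_cases ha : cons a x ∈ Sig W A (k + n)
      · rw [dualRuelleIter_smul, Measure.smul_apply, ih ha, smul_eq_mul, mul_one]
      · rw [dualRuelleIter_smul]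
        simp [weight, ha]
    rw [dualRuelleIter_add, dualRuelleIter, dualRuelleIter, dualRuelle_dirac, dualRuelleIter_sum,
      Measure.sum_apply _ .univ, tsum_congr hterm]
    exact tsum_weight_cons (hnorm _ x hx)

end DualRuelle

section BranchCoupling

/-- The transport of `(ℒ^n_k)^* δ_x` that moves `wx` to `wy` for every word `w` of length `n`. -/
noncomputable def branchCoupling (W : ℕ → Set ℕ) (A : ℕ → ℕ → ℕ → Prop) (φ : ℕ → Seq → ℝ)
    (k n : ℕ) (x y : Seq) : Measure (Seq × Seq) :=
  Measure.sum fun w : Fin n → ℕ =>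
    weight W A φ k n (branch w x) • Measure.dirac (branch w x, branch w y)

variable {W : ℕ → Set ℕ} {A : ℕ → ℕ → ℕ → Prop} {φ : ℕ → Seq → ℝ} {k n : ℕ} {x y : Seq}

theorem fst_branchCoupling (hx : x ∈ Sig W A (k + n)) :
    (branchCoupling W A φ k n x y).fst = dualRuelleIter W A φ k n (Measure.dirac x) := by
  simp only [branchCoupling, Measure.fst_sum, dualRuelleIter_dirac hx]
  simp only [Measure.fst, Measure.map_smul, Measure.map_dirac' measurable_fst]

theorem snd_branchCoupling_le {κ : ℕ → ℝ} {r : ℝ} (hr0 : 0 ≤ r) (hr1 : r ≤ 1)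
    (hκ : ∀ i, 0 ≤ κ i) (hφ : ∀ i, HolderOn (Sig W A i) r (κ i) 2 (φ i))
    (hy : y ∈ Sig W A (k + n)) (hxy : agrees x y 1) :
    (branchCoupling W A φ k n x y).snd ≤
      ENNReal.ofReal (Bconst κ r (k + n)) • dualRuelleIter W A φ k n (Measure.dirac y) := by
  simp only [branchCoupling, Measure.snd_sum, dualRuelleIter_dirac hy, smul_measure_sum, smul_smul]
  refine measure_sum_mono fun w => ?_
  rw [Measure.snd, Measure.map_smul, Measure.map_dirac' measurable_snd]
  gcongr
  exact weight_le_Bconst_mul_weight hr0 hr1 hκ hφ (agrees_branch w hxy)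
    (by rwa [shift_iterate_branch])

theorem ae_agrees_branchCoupling (W : ℕ → Set ℕ) (A : ℕ → ℕ → ℕ → Prop) (φ : ℕ → Seq → ℝ)
    (k n : ℕ) {j : ℕ} (hxy : agrees x y j) :
    ∀ᵐ p ∂branchCoupling W A φ k n x y, agrees p.1 p.2 (j + n) := by
  refine Measure.ae_sum_iff.2 fun w => Measure.ae_smul_measure ?_ _
  rw [ae_dirac_eq]
  exact agrees_branch w hxy

end BranchCoupling

section Concentration

theorem ofReal_smul_dualRuelleIter_dirac_prepend_le {W : ℕ → Set ℕ} {A : ℕ → ℕ → ℕ → Prop}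
    {φ : ℕ → Seq → ℝ} {C : ℝ} {k n m : ℕ} {u : ℕ → ℕ} {x : Seq}
    (hu : prepend u m x ∈ Sig W A (k + n))
    (hC : C ≤ Real.exp (birkhoff φ (k + n) m (prepend u m x))) :
    ENNReal.ofReal C • dualRuelleIter W A φ k n (Measure.dirac (prepend u m x)) ≤
      dualRuelleIter W A φ k (n + m) (Measure.dirac x) := by
  have hle := weight_smul_dualRuelleIter_dirac_le (φ := φ) (m := m) hu
  rw [shift_iterate_prepend, weight, Set.indicator_of_mem hu] at hle
  exact le_trans (by gcongr) hle

theorem isProbabilityMeasure_dualRuelleIter_dirac_of_prepend_mem {W : ℕ → Set ℕ}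
    {A : ℕ → ℕ → ℕ → Prop} {φ : ℕ → Seq → ℝ} {k n m : ℕ} {u : ℕ → ℕ} {x : Seq}
    (hnorm : ∀ i, ∀ z ∈ Sig W A (i + 1), Ruelle W A φ i (fun _ => 1) z = 1)
    (hu : prepend u m x ∈ Sig W A (k + n)) :
    IsProbabilityMeasure (dualRuelleIter W A φ k (n + m) (Measure.dirac x)) := by
  have hx : x ∈ Sig W A (k + n + m) := by
    simpa only [shift_iterate_prepend] using shift_iterate_mem_Sig (n := m) hu
  exact isProbabilityMeasure_dualRuelleIter_dirac hnorm (by rwa [← add_assoc])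

theorem Wass_dualRuelleIter_dirac_le {W : ℕ → Set ℕ} {A : ℕ → ℕ → ℕ → Prop} {φ : ℕ → Seq → ℝ}
    {κ : ℕ → ℝ} {r α : ℝ} (hr0 : 0 ≤ r) (hr1 : r ≤ 1) (hα : 0 ≤ α) (hκ : ∀ i, 0 ≤ κ i)
    (hφ : ∀ i, HolderOn (Sig W A i) r (κ i) 2 (φ i))
    (hnorm : ∀ i, ∀ z ∈ Sig W A (i + 1), Ruelle W A φ i (fun _ => 1) z = 1)
    {k n : ℕ} {x y : Seq} (hx : x ∈ Sig W A (k + n)) (hy : y ∈ Sig W A (k + n))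
    (hxy : agrees x y 1) {μ ν : Measure Seq} [IsProbabilityMeasure μ] [IsProbabilityMeasure ν]
    {C : ℝ} (hC : 0 ≤ C)
    (hμ : ENNReal.ofReal C • dualRuelleIter W A φ k n (Measure.dirac x) ≤ μ)
    (hν : ENNReal.ofReal C • dualRuelleIter W A φ k n (Measure.dirac y) ≤ ν) :
    Wass (fun a b => min 1 (α * dr r a b)) μ ν ≤
      1 - (1 - r ^ n * α) * C / Bconst κ r (k + n) := by
  have hB : 1 ≤ Bconst κ r (k + n) := one_le_Bconst hκ hr0 _
  set B := Bconst κ r (k + n)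
  have hCB : 0 ≤ C / B := by positivity
  let m := ENNReal.ofReal (C / B) • branchCoupling W A φ k n x y
  have hmass : m.real Set.univ = C / B := by
    have := isProbabilityMeasure_dualRuelleIter_dirac hnorm hx
    rw [measureReal_def, Measure.smul_apply, ← Measure.fst_univ, fst_branchCoupling hx,
      measure_univ, smul_eq_mul, mul_one, ENNReal.toReal_ofReal hCB]
  have hfst : m.fst ≤ μ := by
    rw [Measure.fst, Measure.map_smul]
    refine le_trans ?_ hμ
    rw [← fst_branchCoupling (y := y) hx, Measure.fst]
    gcongr
    exact div_le_self hC hB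
  have hsnd : m.snd ≤ ν := by
    rw [Measure.snd, Measure.map_smul]
    refine le_trans ?_ hν
    have hCBB : ENNReal.ofReal C = ENNReal.ofReal (C / B) * ENNReal.ofReal B := by
      rw [← ENNReal.ofReal_mul hCB, div_mul_cancel₀ _ (by positivity)]
    rw [hCBB, mul_smul]
    gcongr
    exact snd_branchCoupling_le hr0 hr1 hκ hφ hy hxy
  have hclose : ∀ᵐ p ∂m, min 1 (α * dr r p.1 p.2) ≤ r ^ n * α := by
    refine Measure.ae_smul_measure ?_ _
    filter_upwards [ae_agrees_branchCoupling W A φ k n hxy] with p hp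
    rw [mul_comm _ α]
    refine (min_le_right _ _).trans (mul_le_mul_of_nonneg_left ?_ hα)
    exact dr_le_pow_of_agrees hr0 hr1 fun i hi => hp i (by lia)
  rw [mul_div_assoc, ← hmass]
  exact Wass_le_of_fst_le_of_snd_le
    (fun a b => le_min zero_le_one (mul_nonneg hα (dr_nonneg hr0 a b)))
    (fun a b => min_le_left _ _) hfst hsnd (by positivity) hclose

end Concentration

namespace HstarSystem

variable (S : HstarSystem)

theorem alphaC_pos (k : ℕ) : 0 < S.alphaC k := div_pos (Real.exp_pos _) S.hβ.1

theorem pow_nseq_mul_alphaC_lt_one (k : ℕ) : S.r ^ S.nseq k * S.alphaC k < 1 := by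
  have hpow : 0 < S.r ^ S.nseq k := pow_pos S.hr.1 _
  have hfloor : -Real.log (S.alphaC k) / Real.log S.r < S.nseq k := by
    exact_mod_cast Int.floor_lt.1 (Int.add_one_le_iff.1 (S.hn k))
  rw [div_lt_iff_of_neg (Real.log_neg S.hr.1 S.hr.2)] at hfloor
  rw [← Real.log_neg_iff (mul_pos hpow (S.alphaC_pos k)),
    Real.log_mul hpow.ne' (S.alphaC_pos k).ne', Real.log_pow]
  linarith

theorem holderOn_two (i : ℕ) : HolderOn (Sig S.W S.A i) S.r (S.κ i) 2 (S.φ i) := by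
  by_cases hi : i ∈ S.K
  · exact (S.holder1 i hi).anti_index one_le_two
  · exact S.holder2 i hi

theorem prepend_u_zero {k : ℕ} {x : Seq} (hx : x ∈ Sig S.W S.A (k + S.mseq k)) :
    prepend (S.u k x) (S.mseq k) x 0 = S.o k := by
  exact (if_pos (S.hm_mem k).1).trans (S.hu k x hx).2.1

end HstarSystem

theorem dual_ruelle_dirac_concentration_general {W : ℕ → Set ℕ} {A : ℕ → ℕ → ℕ → Prop}
    {φ : ℕ → Seq → ℝ} {κ : ℕ → ℝ} {r α C : ℝ} (hr0 : 0 ≤ r) (hr1 : r ≤ 1) (hα : 0 ≤ α)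
    (hκ : ∀ i, 0 ≤ κ i) (hφ : ∀ i, HolderOn (Sig W A i) r (κ i) 2 (φ i))
    (hnorm : ∀ i, ∀ z ∈ Sig W A (i + 1), Ruelle W A φ i (fun _ => 1) z = 1)
    {k n m : ℕ} (hαn : r ^ n * α < 1) (hC : 0 < C) {u v : ℕ → ℕ} {x y : Seq}
    (hu : prepend u m x ∈ Sig W A (k + n)) (hv : prepend v m y ∈ Sig W A (k + n))
    (huv : prepend u m x 0 = prepend v m y 0)
    (hCu : C ≤ Real.exp (birkhoff φ (k + n) m (prepend u m x)))
    (hCv : C ≤ Real.exp (birkhoff φ (k + n) m (prepend v m y))) :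
    1 - (1 - r ^ n * α) * C / Bconst κ r (k + n) < 1 ∧
      Wass (fun a b => min 1 (α * dr r a b)) (dualRuelleIter W A φ k (n + m) (Measure.dirac x))
          (dualRuelleIter W A φ k (n + m) (Measure.dirac y)) ≤
        1 - (1 - r ^ n * α) * C / Bconst κ r (k + n) := by
  refine ⟨sub_lt_self _ (div_pos (mul_pos (sub_pos.2 hαn) hC) (Real.exp_pos _)), ?_⟩
  have := isProbabilityMeasure_dualRuelleIter_dirac_of_prepend_mem hnorm hu
  have := isProbabilityMeasure_dualRuelleIter_dirac_of_prepend_mem hnorm hv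
  have huv' : agrees (prepend u m x) (prepend v m y) 1 := by simpa [agrees] using huv
  exact Wass_dualRuelleIter_dirac_le hr0 hr1 hα hκ hφ hnorm hu hv huv' hC.le
    (ofReal_smul_dualRuelleIter_dirac_prepend_le hu hCu)
    (ofReal_smul_dualRuelleIter_dirac_prepend_le hv hCv)

/-- (Concentration near the diagonal.) Under property `(H*)`, for all
`x, y ∈ Σ_{k+l_k}` the dual Ruelle images of the Dirac measures satisfy
`W_k((ℒ^{l_k}_k)^* δ_x, (ℒ^{l_k}_k)^* δ_y) ≤ s_k` with
`s_k = 1 − (1 − r^{n_k} α_k) C_{k+n_k}/B_{k+n_k} < 1`. -/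
theorem dual_ruelle_dirac_concentration (S : HstarSystem) (k : ℕ)
    (x : Seq) (hx : x ∈ Sig S.W S.A (k + S.lconst k))
    (y : Seq) (hy : y ∈ Sig S.W S.A (k + S.lconst k)) :
    S.sconst k < 1 ∧
      Wass (S.dbar k) (dualRuelleIter S.W S.A S.φ k (S.lconst k) (Measure.dirac x))
          (dualRuelleIter S.W S.A S.φ k (S.lconst k) (Measure.dirac y)) ≤
        S.sconst k := by
  have hx' : x ∈ Sig S.W S.A (k + S.nseq k + S.mseq (k + S.nseq k)) := by rwa [add_assoc]
  have hy' : y ∈ Sig S.W S.A (k + S.nseq k + S.mseq (k + S.nseq k)) := by rwa [add_assoc]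
  exact dual_ruelle_dirac_concentration_general S.hr.1.le S.hr.2.le (S.alphaC_pos k).le S.κnonneg
    S.holderOn_two S.normalized (S.pow_nseq_mul_alphaC_lt_one k) (S.hC_pos _) (S.hu _ x hx').1
    (S.hu _ y hy').1 ((S.prepend_u_zero hx').trans (S.prepend_u_zero hy').symm)
    (S.hC_le _ x hx') (S.hC_le _ y hy')

end NSShift
end

section
/- Assume (X, T, Ω, P, θ) is a random countable topological Markov chain with the b.i.p. property, condition (Ĥ) holds and ℒ_ω(1) = 1 a.s., and let {μ_ω} be the unique random probability measure with ℒ*_ω(μ_{θω}) = μ_ω a.s. Let c, t, B_ω and the random sequences (l_n(ω)), (k_n(ω)) be as in the Vasershtein contraction corollary. Then for every fibrewise Lipschitz continuous function f = {f_ω} with ∫ f dμ_ω = 0 a.s. and every g = {g_ω} with ∫ |g| dμ_ω < ∞ a.s., for all n ∈ ℕ and a.e. ω: |∫ f · (g ∘ T^{l_n(ω)}_ω) dμ_ω| ≤ 2c t^n D_ω(f) ∫ |g| dμ_{θ^{l_n(ω)}ω}, and |∫ f · (g ∘ T^{k_n(ω)}_{θ^{−k_n(ω)}ω}) dμ_{θ^{−k_n(ω)}ω}|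 ≤ 4 B_ω t^n D_{θ^{−k_n(ω)}ω}(f) ∫ |g| dμ_ω. -/
open MeasureTheory Real Filter

namespace RTMC

/-- The ambient sequence space `ℕ^ℕ`. -/
abbrev Seq := ℕ → ℕ

/-- The shift map. -/
def shift (x : Seq) : Seq := fun i => x (i + 1)

/-- Prepend one symbol to a sequence. -/
def cons (a : ℕ) (x : Seq) : Seq := fun i =>
  match i with
  | 0 => a
  | j + 1 => x j

/-- `x` and `y` agree in their first `k` coordinates. -/
def agrees (x y : Seq) (k : ℕ) : Prop := ∀ i < k, x i = y i

open scoped Classical in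
/-- The shift metric `d_r(x,y) = r^{min{i : x_i ≠ y_i}}`. -/
noncomputable def dr (r : ℝ) (x y : Seq) : ℝ :=
  if x = y then 0 else r ^ sInf {i | x i ≠ y i}

/-- Prepend the first `len` symbols of `w` to `x` (the inverse branch `τ_w`). -/
def prepend (w : ℕ → ℕ) (len : ℕ) (x : Seq) : Seq := fun i =>
  if i < len then w i else x (i - len)

variable {Ω : Type*}

/-- The fibre `X_ω` of a random topological Markov chain with alphabets `W` and
transition matrices `A` (`A ω i j` means `α^ω_{ij} = 1`). -/
def Xfib (θ : Ω → Ω) (W : Ω → Set ℕ) (A : Ω → ℕ → ℕ → Prop) (ω : Ω) : Set Seq :=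
  {x | (∀ i, x i ∈ W (θ^[i] ω)) ∧ ∀ i, A (θ^[i] ω) (x i) (x (i + 1))}

open scoped Classical in
/-- The Ruelle operator `ℒ_ω(f)(x) = Σ_{T_ω y = x} e^{φ_ω(y)} f(y)`, for `x ∈ X_{θω}`. -/
noncomputable def Lr (θ : Ω → Ω) (W : Ω → Set ℕ) (A : Ω → ℕ → ℕ → Prop) (φ : Ω → Seq → ℝ)
    (ω : Ω) (f : Seq → ℝ) (x : Seq) : ℝ :=
  ∑' a : ℕ, if cons a x ∈ Xfib θ W A ω then Real.exp (φ ω (cons a x)) * f (cons a x) else 0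

/-- The iterated Ruelle operator `ℒ^n_ω = ℒ_{θ^{n-1}ω} ∘ ⋯ ∘ ℒ_ω`. -/
noncomputable def Lrn (θ : Ω → Ω) (W : Ω → Set ℕ) (A : Ω → ℕ → ℕ → Prop) (φ : Ω → Seq → ℝ)
    (ω : Ω) : ℕ → (Seq → ℝ) → Seq → ℝ
  | 0 => fun f => f
  | n + 1 => fun f => Lr θ W A φ (θ^[n] ω) (Lrn θ W A φ ω n f)

/-- The dual Ruelle operator `ℒ^*_ω` on Borel measures, satisfying
`∫ f d(ℒ^*_ω μ) = ∫ ℒ_ω(f) dμ`. -/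
noncomputable def dualLr (θ : Ω → Ω) (W : Ω → Set ℕ) (A : Ω → ℕ → ℕ → Prop) (φ : Ω → Seq → ℝ)
    (ω : Ω) (μ : Measure Seq) : Measure Seq :=
  Measure.sum fun a : ℕ =>
    (μ.withDensity fun x =>
      ENNReal.ofReal ((Xfib θ W A ω).indicator (fun y => Real.exp (φ ω y)) (cons a x))).map
      (cons a)

/-- The iterated dual operator `(ℒ^n_ω)^* = ℒ^*_ω ∘ ⋯ ∘ ℒ^*_{θ^{n-1}ω}`. -/
noncomputable def dualLrn (θ : Ω → Ω) (W : Ω → Set ℕ) (A : Ω → ℕ → ℕ → Prop)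
    (φ : Ω → Seq → ℝ) : ℕ → Ω → Measure Seq → Measure Seq
  | 0, _, μ => μ
  | n + 1, ω, μ => dualLr θ W A φ ω (dualLrn θ W A φ n (θ ω) μ)

/-- The Lipschitz constant of `f` on `S` with respect to the distance function `d`. -/
noncomputable def LipC (S : Set Seq) (d : Seq → Seq → ℝ) (f : Seq → ℝ) : ℝ :=
  sInf {K : ℝ | 0 ≤ K ∧ ∀ x ∈ S, ∀ y ∈ S, |f x - f y| ≤ K * d x y}

/-- The sup norm of `f` on `S`. -/
noncomputable def supNormOn (S : Set Seq) (f : Seq → ℝ) : ℝ :=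
  sSup {t : ℝ | ∃ x ∈ S, t = |f x|}

/-- The Lipschitz norm `‖f‖_L = D(f) + ‖f‖_∞` on `S` w.r.t. the distance `d`. -/
noncomputable def LipNorm (S : Set Seq) (d : Seq → Seq → ℝ) (f : Seq → ℝ) : ℝ :=
  LipC S d f + supNormOn S f

/-- The Vasershtein distance of two Borel measures w.r.t. the cost function `d`. -/
noncomputable def Wass (d : Seq → Seq → ℝ) (μ ν : Measure Seq) : ℝ :=
  sInf {t : ℝ | ∃ m : Measure (Seq × Seq),
    m.map Prod.fst = μ ∧ m.map Prod.snd = ν ∧ t = ∫ p, d p.1 p.2 ∂m}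

/-- The Birkhoff sum `S_n φ_ω = Σ_{i=0}^{n-1} φ_{θ^i ω} ∘ T^i_ω`. -/
noncomputable def birkhoffR (θ : Ω → Ω) (φ : Ω → Seq → ℝ) (ω : Ω) (n : ℕ) (x : Seq) : ℝ :=
  ∑ i ∈ Finset.range n, φ (θ^[i] ω) (shift^[i] x)

/-- `w` is an `ω`-admissible word of length `len`. -/
def AdmR (θ : Ω → Ω) (W : Ω → Set ℕ) (A : Ω → ℕ → ℕ → Prop) (ω : Ω) (w : ℕ → ℕ)
    (len : ℕ) : Prop :=
  (∀ i < len, w i ∈ W (θ^[i] ω)) ∧ ∀ i, i + 1 < len → A (θ^[i] ω) (w i) (w (i + 1))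

/-- `B_ω = exp Σ_{k=1}^∞ κ(θ^{−k} ω) r^k`. -/
noncomputable def Brand (θinv : Ω → Ω) (κ : Ω → ℝ) (r : ℝ) (ω : Ω) : ℝ :=
  Real.exp (∑' k : ℕ, κ (θinv^[k + 1] ω) * r ^ (k + 1))

/-- `α_ω := B_ω/β`. -/
noncomputable def alphaR (θinv : Ω → Ω) (κ : Ω → ℝ) (r β : ℝ) (ω : Ω) : ℝ :=
  Brand θinv κ r ω / β

/-- The metric `d̄_ω(x,y) := min{1, α_ω d_r(x,y)}`. -/
noncomputable def dbarR (θinv : Ω → Ω) (κ : Ω → ℝ) (r β : ℝ) (ω : Ω) (x y : Seq) : ℝ :=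
  min 1 (alphaR θinv κ r β ω * dr r x y)

/-- `t_ω := max{β, 1 − (1 − r^{n_ω} α_ω) C_{θ^{n_ω}ω}/B_{θ^{n_ω}ω}}`. -/
noncomputable def tR (θ θinv : Ω → Ω) (κ : Ω → ℝ) (r β : ℝ) (nseq : Ω → ℕ) (C : Ω → ℝ)
    (ω : Ω) : ℝ :=
  max β (1 - (1 - r ^ nseq ω * alphaR θinv κ r β ω) * C (θ^[nseq ω] ω) /
    Brand θinv κ r (θ^[nseq ω] ω))

/-- `Λ_k(ω) = Π_{i=0}^{k-1} λ_{θ^i ω}`. -/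
noncomputable def LamProd (θ : Ω → Ω) (lam : Ω → ℝ) (ω : Ω) (k : ℕ) : ℝ :=
  ∏ i ∈ Finset.range k, lam (θ^[i] ω)

variable [MeasurableSpace Ω]

/-- The big images and big preimages (b.i.p.) property of a random topological
Markov chain, together with fibrewise topological mixing. -/
structure BIPData (θ θinv : Ω → Ω) (W : Ω → Set ℕ) (A : Ω → ℕ → ℕ → Prop)
    (P : Measure Ω) where
  /-- the big images set `Ω_bi` -/
  Ωbi : Set Ω
  /-- the big preimages set `Ω_bp` -/
  Ωbp : Set Ω
  /-- the finite set `ℐ ⊆ ℕ` -/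
  I : Finset ℕ
  measΩbi : MeasurableSet Ωbi
  measΩbp : MeasurableSet Ωbp
  posΩbi : 0 < P Ωbi
  posΩbp : 0 < P Ωbp
  /-- big images: for `ω ∈ Ω_bi` and `a ∈ 𝒲¹_{θ^{-1}ω}` there is `b ∈ ℐ` with
  `ab ∈ 𝒲²_{θ^{-1}ω}` -/
  bigImages : ∀ᵐ ω ∂P, ω ∈ Ωbi → ∀ a ∈ W (θinv ω),
    ∃ b ∈ I, (b : ℕ) ∈ W ω ∧ A (θinv ω) a b
  /-- big preimages: for `ω ∈ Ω_bp` and `a ∈ 𝒲¹_ω` there is `b ∈ ℐ` with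
  `ba ∈ 𝒲²_{θ^{-1}ω}` -/
  bigPreimages : ∀ᵐ ω ∂P, ω ∈ Ωbp → ∀ a ∈ W ω,
    ∃ b ∈ I, (b : ℕ) ∈ W (θinv ω) ∧ A (θinv ω) b a
  /-- fibrewise topological mixing, with random mixing times `N_{ab}` -/
  mixing : ∀ a b : ℕ, ∃ N : Ω → ℕ, Measurable N ∧ ∀ᵐ ω ∂P, ∀ n, N ω ≤ n →
    a ∈ W ω → b ∈ W (θ^[n] ω) → ∃ x ∈ Xfib θ W A ω, x 0 = a ∧ x n = b

/-- The potential `φ` is fibrewise locally Hölder continuous with index 2,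
parameter `r` and Hölder constants `κ(ω)`: `V^ω_n(φ) ≤ κ(ω) r^n` for `n ≥ 2`. -/
def LocHolder2 (θ : Ω → Ω) (W : Ω → Set ℕ) (A : Ω → ℕ → ℕ → Prop) (P : Measure Ω)
    (φ : Ω → Seq → ℝ) (r : ℝ) (κ : Ω → ℝ) : Prop :=
  ∀ᵐ ω ∂P, ∀ n, 2 ≤ n → ∀ x ∈ Xfib θ W A ω, ∀ y ∈ Xfib θ W A ω, agrees x y n →
    |φ ω x - φ ω y| ≤ κ ω * r ^ n

/-- `V^ω_1(φ) < ∞` for a.e. `ω` with `θω ∈ S`. -/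
def Var1Fin (θ : Ω → Ω) (W : Ω → Set ℕ) (A : Ω → ℕ → ℕ → Prop) (P : Measure Ω)
    (φ : Ω → Seq → ℝ) (S : Set Ω) : Prop :=
  ∀ᵐ ω ∂P, θ ω ∈ S → ∃ M : ℝ, ∀ x ∈ Xfib θ W A ω, ∀ y ∈ Xfib θ W A ω, agrees x y 1 →
    |φ ω x - φ ω y| ≤ M

/-- A random probability measure `{μ_ω}`. -/
def IsRandomProbMeasure (θ : Ω → Ω) (W : Ω → Set ℕ) (A : Ω → ℕ → ℕ → Prop)
    (P : Measure Ω) (μ : Ω → Measure Seq) : Prop :=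
  (∀ B : Set Seq, MeasurableSet B → Measurable fun ω => μ ω B) ∧
    ∀ᵐ ω ∂P, IsProbabilityMeasure (μ ω) ∧ μ ω (Xfib θ W A ω) = 1

/-- `f = {f_ω}` is fibrewise Lipschitz continuous (w.r.t. `d_r`) and bounded. -/
def FibLip (θ : Ω → Ω) (W : Ω → Set ℕ) (A : Ω → ℕ → ℕ → Prop) (P : Measure Ω) (r : ℝ)
    (f : Ω → Seq → ℝ) : Prop :=
  ∀ᵐ ω ∂P, (∃ K, 0 ≤ K ∧ ∀ x ∈ Xfib θ W A ω, ∀ y ∈ Xfib θ W A ω,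
      |f ω x - f ω y| ≤ K * dr r x y) ∧ ∃ M, ∀ x ∈ Xfib θ W A ω, |f ω x| ≤ M

/-- `f = {f_ω}` is fibrewise Hölder continuous with parameter `r`. -/
def FibHolder (θ : Ω → Ω) (W : Ω → Set ℕ) (A : Ω → ℕ → ℕ → Prop) (P : Measure Ω) (r : ℝ)
    (f : Ω → Seq → ℝ) : Prop :=
  ∀ᵐ ω ∂P, ∃ κf M : ℝ, (∀ k, 1 ≤ k → ∀ x ∈ Xfib θ W A ω, ∀ y ∈ Xfib θ W A ω,
      agrees x y k → |f ω x - f ω y| ≤ κf * r ^ k) ∧ ∀ x ∈ Xfib θ W A ω, |f ω x| ≤ M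

/-!
Invariance `ℒ*_ω μ_{θω} = μ_ω` replaces `∫ h dμ_ω` by `∫ ℒⁿ_ω h dμ_{θⁿω}`, and
`ℒⁿ_ω(f · (g ∘ Tⁿ)) = (ℒⁿ_ω f) · g`. Hence the covariance of `f` and `g ∘ Tⁿ` equals
`∫ (ℒⁿ_ω f − ∫ f dμ_ω) · g dμ_{θⁿω}`, which is at most the supremum of `|ℒⁿ_ω f − ∫ f dμ_ω|`
times `∫ |g| dμ_{θⁿω}`. The normalisation `ℒ_ω 1 = 1` makes the shift carry `μ_ω` to `μ_{θω}`,
so `g ∘ Tⁿ` is integrable whenever `g` is. The backward estimate is the forward one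
at `θ^{-k}ω`.
-/

section Orbits

variable {Ω : Type*} [MeasurableSpace Ω] {P : Measure Ω} {θ θinv : Ω → Ω}

theorem measurePreserving_of_inverse (hθ : MeasurePreserving θ P P) (hθinv : Measurable θinv)
    (hinv : Function.LeftInverse θinv θ) : MeasurePreserving θinv P P := by
  refine ⟨hθinv, ?_⟩
  rw [← hθ.map_eq, Measure.map_map hθinv hθ.measurable, hinv.comp_eq_id, Measure.map_id, hθ.map_eq]

theorem ae_all_iterate (hθ : Measure.QuasiMeasurePreserving θ P P) {p : Ω → Prop}
    (hp : ∀ᵐ ω ∂P, p ω) : ∀ᵐ ω ∂P, ∀ n, p (θ^[n] ω) :=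
  ae_all_iff.2 fun n => (hθ.iterate n).ae hp

end Orbits

section BranchMeasure

variable {α β ι : Type*} [MeasurableSpace α] [MeasurableSpace β] {ν : Measure α}

theorem integrable_tsum [Countable ι] {F : ι → α → ℝ} (hF : ∀ i, Integrable (F i) ν)
    (hsum : Summable fun i => ∫ x, ‖F i x‖ ∂ν) : Integrable (fun x => ∑' i, F i x) ν := by
  refine ⟨(AEMeasurable.tsum fun i => (hF i).aemeasurable).aestronglyMeasurable, ?_⟩
  calc ∫⁻ x, ‖∑' i, F i x‖ₑ ∂ν
      ≤ ∫⁻ x, ∑' i, ‖F i x‖ₑ ∂ν := lintegral_mono fun x => enorm_tsum_le_tsum_enorm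
    _ = ∑' i, ∫⁻ x, ‖F i x‖ₑ ∂ν := lintegral_tsum fun i => (hF i).1.enorm
    _ = ∑' i, ENNReal.ofReal (∫ x, ‖F i x‖ ∂ν) := by
        simp only [ofReal_integral_norm_eq_lintegral_enorm (hF _)]
    _ < ⊤ := hsum.tsum_ofReal_lt_top

section SingleBranch

variable {E : Type*} [NormedAddCommGroup E] [NormedSpace ℝ E] {j : α → β} {w : α → ℝ} {h : β → E}

theorem integrable_map_withDensity_ofReal_iff (hj : Measurable j) (hw : Measurable w)
    (hw0 : ∀ x, 0 ≤ w x)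
    (hh : AEStronglyMeasurable h ((ν.withDensity fun x => ENNReal.ofReal (w x)).map j)) :
    Integrable h ((ν.withDensity fun x => ENNReal.ofReal (w x)).map j) ↔
      Integrable (fun x => w x • h (j x)) ν := by
  rw [integrable_map_measure hh hj.aemeasurable, integrable_withDensity_iff_integrable_smul'
    hw.ennreal_ofReal (ae_of_all _ fun _ => ENNReal.ofReal_lt_top)]
  simp only [ENNReal.toReal_ofReal (hw0 _), Function.comp_apply]

theorem integral_map_withDensity_ofReal (hj : Measurable j) (hw : Measurable w)
    (hw0 : ∀ x, 0 ≤ w x)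
    (hh : AEStronglyMeasurable h ((ν.withDensity fun x => ENNReal.ofReal (w x)).map j)) :
    ∫ y, h y ∂((ν.withDensity fun x => ENNReal.ofReal (w x)).map j) =
      ∫ x, w x • h (j x) ∂ν := by
  rw [integral_map hj.aemeasurable hh, integral_withDensity_eq_integral_toReal_smul
    hw.ennreal_ofReal (ae_of_all _ fun _ => ENNReal.ofReal_lt_top)]
  simp only [ENNReal.toReal_ofReal (hw0 _)]

end SingleBranch

/-- The image of `ν` under the dual of the transfer operator `h ↦ ∑ᵢ wᵢ · (h ∘ jᵢ)` with inverse
branches `jᵢ` and nonnegative weights `wᵢ`. A negative weight counts as `0`. -/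
noncomputable def branchMeasure (j : ι → α → β) (w : ι → α → ℝ) (ν : Measure α) : Measure β :=
  Measure.sum fun i => (ν.withDensity fun x => ENNReal.ofReal (w i x)).map (j i)

variable [Countable ι] {j : ι → α → β} {w : ι → α → ℝ} {h : β → ℝ}

theorem summable_integral_norm_of_integrable_branchMeasure (hj : ∀ i, Measurable (j i))
    (hw : ∀ i, Measurable (w i)) (hw0 : ∀ i x, 0 ≤ w i x)
    (hh : Integrable h (branchMeasure j w ν)) :
    (∀ i, Integrable (fun x => w i x * h (j i x)) ν) ∧
      Summable fun i => ∫ x, ‖w i x * h (j i x)‖ ∂ν := by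
  obtain ⟨hbranch, hsum⟩ := integrable_sum_measure_iff.1 hh
  refine ⟨fun i => (integrable_map_withDensity_ofReal_iff (hj i) (hw i) (hw0 i)
    (hbranch i).1).1 (hbranch i), hsum.congr fun i => ?_⟩
  rw [integral_map_withDensity_ofReal (hj i) (hw i) (hw0 i) (hbranch i).1.norm]
  simp only [norm_mul, Real.norm_of_nonneg (hw0 i _), smul_eq_mul]

theorem integrable_tsum_of_integrable_branchMeasure (hj : ∀ i, Measurable (j i))
    (hw : ∀ i, Measurable (w i)) (hw0 : ∀ i x, 0 ≤ w i x)
    (hh : Integrable h (branchMeasure j w ν)) :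
    Integrable (fun x => ∑' i, w i x * h (j i x)) ν :=
  have ⟨hint, hsum⟩ := summable_integral_norm_of_integrable_branchMeasure hj hw hw0 hh
  integrable_tsum hint hsum

theorem integral_branchMeasure (hj : ∀ i, Measurable (j i)) (hw : ∀ i, Measurable (w i))
    (hw0 : ∀ i x, 0 ≤ w i x) (hh : Integrable h (branchMeasure j w ν)) :
    ∫ y, h y ∂(branchMeasure j w ν) = ∫ x, ∑' i, w i x * h (j i x) ∂ν := by
  obtain ⟨hint, hsum⟩ := summable_integral_norm_of_integrable_branchMeasure hj hw hw0 hh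
  rw [← integral_tsum_of_summable_integral_norm hint hsum]
  refine (integral_sum_measure hh).trans (tsum_congr fun i => ?_)
  exact integral_map_withDensity_ofReal (hj i) (hw i) (hw0 i)
    (hh.1.mono_measure (Measure.le_sum _ i))

theorem map_branchMeasure {s : β → α} (hs : Measurable s) (hsj : ∀ i, Function.LeftInverse s (j i))
    (hj : ∀ i, Measurable (j i)) (hw : ∀ i, Measurable (w i)) (hw0 : ∀ i x, 0 ≤ w i x)
    (hsum : ∀ᵐ x ∂ν, HasSum (fun i => w i x) 1) : (branchMeasure j w ν).map s = ν := by
  have hdensity : (∑' i, fun x => ENNReal.ofReal (w i x)) =ᵐ[ν] 1 := by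
    filter_upwards [hsum] with x hx
    rw [tsum_apply (Pi.summable.2 fun _ => ENNReal.summable),
      ← ENNReal.ofReal_tsum_of_nonneg (hw0 · x) hx.summable, hx.tsum_eq, ENNReal.ofReal_one,
      Pi.one_apply]
  calc (branchMeasure j w ν).map s
      = Measure.sum fun i => ν.withDensity fun x => ENNReal.ofReal (w i x) := by
        rw [branchMeasure, Measure.map_sum hs.aemeasurable]
        simp only [Measure.map_map hs (hj _), (hsj _).comp_eq_id, Measure.map_id]
    _ = ν.withDensity (∑' i, fun x => ENNReal.ofReal (w i x)) :=
        (withDensity_tsum fun i => (hw i).ennreal_ofReal).symm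
    _ = ν := by rw [withDensity_congr_ae hdensity, withDensity_one]

end BranchMeasure

section SequenceSpace

theorem measurable_cons (a : ℕ) : Measurable (cons a) := by
  refine measurable_pi_lambda _ fun i => ?_
  cases i with
  | zero => exact measurable_const
  | succ j => exact measurable_pi_apply j

theorem measurable_shift : Measurable shift :=
  measurable_pi_lambda _ fun i => measurable_pi_apply (i + 1)

theorem leftInverse_shift_cons (a : ℕ) : Function.LeftInverse shift (cons a) := fun _ => rfl

theorem dr_le_pow_of_agrees {r : ℝ} (hr0 : 0 ≤ r) (hr1 : r ≤ 1) {x y : Seq} {n : ℕ}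
    (h : agrees x y n) : dr r x y ≤ r ^ n := by
  unfold dr
  split_ifs with hxy
  · exact pow_nonneg hr0 n
  · have hne : {i | x i ≠ y i}.Nonempty := Function.ne_iff.1 hxy
    exact pow_le_pow_of_le_one hr0 hr1 (le_csInf hne fun i hi => not_lt.1 fun hin => hi (h i hin))

theorem continuousOn_of_agrees {S : Set Seq} {f : Seq → ℝ} {u : ℕ → ℝ}
    (hu : Tendsto u atTop (nhds 0))
    (hf : ∀ᶠ n in atTop, ∀ x ∈ S, ∀ y ∈ S, agrees x y n → |f x - f y| ≤ u n) :
    ContinuousOn f S := by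
  intro x hx
  refine Metric.tendsto_nhds.2 fun ε hε => ?_
  obtain ⟨n, hfn, hun⟩ := (hf.and (hu.eventually (gt_mem_nhds hε))).exists
  have hcyl : PiNat.cylinder x n ∈ nhds x :=
    (PiNat.isOpen_cylinder _ x n).mem_nhds (PiNat.self_mem_cylinder x n)
  filter_upwards [mem_nhdsWithin_of_mem_nhds hcyl, self_mem_nhdsWithin] with y hy hyS
  exact (hfn y hyS x hx hy).trans_lt hun

end SequenceSpace

section Fibres

variable {Ω : Type*} {θ : Ω → Ω} {W : Ω → Set ℕ} {A : Ω → ℕ → ℕ → Prop}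

theorem measurableSet_Xfib (ω : Ω) : MeasurableSet (Xfib θ W A ω) := by
  have hsymbol (i : ℕ) : Measurable fun x : Seq => x i ∈ W (θ^[i] ω) :=
    (Measurable.of_discrete (f := fun a => a ∈ W (θ^[i] ω))).comp (measurable_pi_apply i)
  have hpair (i : ℕ) : Measurable fun x : Seq => (x i, x (i + 1)) :=
    (measurable_pi_apply i).prodMk (measurable_pi_apply (i + 1))
  have htransition (i : ℕ) : Measurable fun x : Seq => A (θ^[i] ω) (x i) (x (i + 1)) :=
    (Measurable.of_discrete (f := fun p : ℕ × ℕ => A (θ^[i] ω) p.1 p.2)).comp (hpair i)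
  exact ((Measurable.forall hsymbol).and (.forall htransition)).setOf

variable [MeasurableSpace Ω] {P : Measure Ω} {μ : Ω → Measure Seq}

theorem IsRandomProbMeasure.ae_mem_Xfib (hμ : IsRandomProbMeasure θ W A P μ) :
    ∀ᵐ ω ∂P, ∀ᵐ x ∂(μ ω), x ∈ Xfib θ W A ω := by
  filter_upwards [hμ.2] with ω ⟨_, hfull⟩
  exact (prob_compl_eq_zero_iff (measurableSet_Xfib ω)).2 hfull

theorem FibLip.ae_memLp_top {r : ℝ} (hr0 : 0 ≤ r) (hr1 : r < 1)
    (hμ : IsRandomProbMeasure θ W A P μ) {f : Ω → Seq → ℝ} (hf : FibLip θ W A P r f) :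
    ∀ᵐ ω ∂P, MemLp (f ω) ⊤ (μ ω) := by
  filter_upwards [hf, hμ.ae_mem_Xfib] with ω ⟨⟨K, hK0, hK⟩, M, hM⟩ hmem
  have hcont : ContinuousOn (f ω) (Xfib θ W A ω) := by
    refine continuousOn_of_agrees (u := fun n => K * r ^ n)
      (by simpa using (tendsto_pow_atTop_nhds_zero_of_lt_one hr0 hr1).const_mul K)
      (.of_forall fun n x hx y hy hxy => (hK x hx y hy).trans ?_)
    gcongr
    exact dr_le_pow_of_agrees hr0 hr1.le hxy
  refine memLp_top_of_bound ?_ M (hmem.mono hM)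
  simpa only [Measure.restrict_eq_self_of_ae_mem hmem] using
    hcont.aestronglyMeasurable (μ := μ ω) (measurableSet_Xfib ω)

end Fibres

section RuelleOperator

variable {Ω : Type*} {θ : Ω → Ω} {W : Ω → Set ℕ} {A : Ω → ℕ → ℕ → Prop} {φ : Ω → Seq → ℝ} {ω : Ω}

/-- The weight `e^{φ_ω} 1_{X_ω}`, extended by zero to the whole sequence space: `ℒ_ω` is the
transfer operator, and `ℒ*_ω` its dual, with inverse branches `cons a` and this weight. -/
noncomputable def ruelleWeight (θ : Ω → Ω) (W : Ω → Set ℕ) (A : Ω → ℕ → ℕ → Prop)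
    (φ : Ω → Seq → ℝ) (ω : Ω) : Seq → ℝ :=
  (Xfib θ W A ω).indicator fun y => Real.exp (φ ω y)

theorem ruelleWeight_nonneg (x : Seq) : 0 ≤ ruelleWeight θ W A φ ω x :=
  Set.indicator_nonneg (fun _ _ => (Real.exp_pos _).le) x

theorem dualLr_eq_branchMeasure (ν : Measure Seq) :
    dualLr θ W A φ ω ν = branchMeasure cons (fun a x => ruelleWeight θ W A φ ω (cons a x)) ν :=
  rfl

theorem Lr_eq_tsum (h : Seq → ℝ) :
    Lr θ W A φ ω h = fun x => ∑' a, ruelleWeight θ W A φ ω (cons a x) * h (cons a x) := by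
  classical
  funext x
  refine tsum_congr fun a => ?_
  rw [ruelleWeight, Set.indicator_apply, ite_mul, zero_mul]

theorem measurable_ruelleWeight (hφ : ContinuousOn (φ ω) (Xfib θ W A ω)) :
    Measurable (ruelleWeight θ W A φ ω) := by
  classical
  rw [ruelleWeight, ← Set.piecewise_eq_indicator]
  exact (Real.continuous_exp.comp_continuousOn hφ).measurable_piecewise continuousOn_const
    (measurableSet_Xfib ω)

theorem LocHolder2.ae_measurable_ruelleWeight [MeasurableSpace Ω] {P : Measure Ω} {r : ℝ}
    {κ : Ω → ℝ} (hr0 : 0 ≤ r) (hr1 : r < 1) (hφ : LocHolder2 θ W A P φ r κ) :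
    ∀ᵐ ω ∂P, Measurable (ruelleWeight θ W A φ ω) := by
  filter_upwards [hφ] with ω hω
  refine measurable_ruelleWeight (continuousOn_of_agrees (u := fun n => κ ω * r ^ n) ?_
    (eventually_atTop.2 ⟨2, hω⟩))
  simpa using (tendsto_pow_atTop_nhds_zero_of_lt_one hr0 hr1).const_mul (κ ω)

theorem integrable_Lr {ν : Measure Seq} (hw : Measurable (ruelleWeight θ W A φ ω)) {h : Seq → ℝ}
    (hh : Integrable h (dualLr θ W A φ ω ν)) : Integrable (Lr θ W A φ ω h) ν := by
  rw [dualLr_eq_branchMeasure] at hh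
  rw [Lr_eq_tsum]
  exact integrable_tsum_of_integrable_branchMeasure measurable_cons
    (fun a => hw.comp (measurable_cons a)) (fun _ _ => ruelleWeight_nonneg _) hh

theorem integral_dualLr {ν : Measure Seq} (hw : Measurable (ruelleWeight θ W A φ ω)) {h : Seq → ℝ}
    (hh : Integrable h (dualLr θ W A φ ω ν)) :
    ∫ x, h x ∂(dualLr θ W A φ ω ν) = ∫ x, Lr θ W A φ ω h x ∂ν := by
  rw [dualLr_eq_branchMeasure] at hh ⊢
  rw [Lr_eq_tsum]
  exact integral_branchMeasure measurable_cons (fun a => hw.comp (measurable_cons a))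
    (fun _ _ => ruelleWeight_nonneg _) hh

theorem map_shift_dualLr {ν : Measure Seq} (hw : Measurable (ruelleWeight θ W A φ ω))
    (hone : ∀ᵐ x ∂ν, Lr θ W A φ ω (fun _ => 1) x = 1) : (dualLr θ W A φ ω ν).map shift = ν := by
  rw [dualLr_eq_branchMeasure]
  refine map_branchMeasure measurable_shift leftInverse_shift_cons measurable_cons
    (fun a => hw.comp (measurable_cons a)) (fun _ _ => ruelleWeight_nonneg _) ?_
  filter_upwards [hone] with x hx
  simp only [Lr_eq_tsum, mul_one] at hx
  have hsummable : Summable fun a => ruelleWeight θ W A φ ω (cons a x) := by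
    by_contra hdiv
    exact zero_ne_one ((tsum_eq_zero_of_not_summable hdiv).symm.trans hx)
  exact hx ▸ hsummable.hasSum

theorem Lr_mul_comp_shift (f g : Seq → ℝ) :
    Lr θ W A φ ω (fun x => f x * g (shift x)) = fun x => Lr θ W A φ ω f x * g x := by
  funext x
  simp only [Lr_eq_tsum, ← tsum_mul_right, leftInverse_shift_cons _ x, mul_assoc]

theorem Lrn_mul_comp_shift_iterate (f g : Seq → ℝ) (n : ℕ) :
    Lrn θ W A φ ω n (fun x => f x * g (shift^[n] x)) = fun x => Lrn θ W A φ ω n f x * g x := by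
  induction n generalizing g with
  | zero => rfl
  | succ n ih =>
    simp only [Lrn, Function.iterate_succ_apply']
    rw [ih (fun x => g (shift x)), Lr_mul_comp_shift]

end RuelleOperator

section Transfer

variable {Ω : Type*} {θ : Ω → Ω} {W : Ω → Set ℕ} {A : Ω → ℕ → ℕ → Prop} {φ : Ω → Seq → ℝ}
  {μ : Ω → Measure Seq} {ω : Ω}

theorem measurePreserving_shift_iterate
    (hshift : ∀ i, MeasurePreserving shift (μ (θ^[i] ω)) (μ (θ^[i + 1] ω))) (n : ℕ) :
    MeasurePreserving shift^[n] (μ ω) (μ (θ^[n] ω)) := by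
  induction n with
  | zero => exact .id _
  | succ n ih => exact Function.iterate_succ' shift n ▸ (hshift n).comp ih

theorem integrable_Lrn_and_integral_eq
    (hw : ∀ i, Measurable (ruelleWeight θ W A φ (θ^[i] ω)))
    (hinv : ∀ i, dualLr θ W A φ (θ^[i] ω) (μ (θ^[i + 1] ω)) = μ (θ^[i] ω))
    {h : Seq → ℝ} (hh : Integrable h (μ ω)) (n : ℕ) :
    Integrable (Lrn θ W A φ ω n h) (μ (θ^[n] ω)) ∧
      ∫ x, h x ∂(μ ω) = ∫ x, Lrn θ W A φ ω n h x ∂(μ (θ^[n] ω)) := by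
  induction n with
  | zero => exact ⟨hh, rfl⟩
  | succ n ih =>
    obtain ⟨hint, heq⟩ := ih
    rw [← hinv n] at hint heq
    exact ⟨integrable_Lr (hw n) hint, heq.trans (integral_dualLr (hw n) hint)⟩

theorem abs_integral_mul_comp_shift_iterate_sub_le
    (hw : ∀ i, Measurable (ruelleWeight θ W A φ (θ^[i] ω)))
    (hinv : ∀ i, dualLr θ W A φ (θ^[i] ω) (μ (θ^[i + 1] ω)) = μ (θ^[i] ω))
    {f g : Seq → ℝ} {n : ℕ} (hfg : Integrable (fun x => f x * g (shift^[n] x)) (μ ω))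
    (hg : Integrable g (μ (θ^[n] ω))) {m C : ℝ}
    (hbound : ∀ᵐ x ∂(μ (θ^[n] ω)), |Lrn θ W A φ ω n f x - m| ≤ C) :
    |∫ x, f x * g (shift^[n] x) ∂(μ ω) - m * ∫ x, g x ∂(μ (θ^[n] ω))| ≤
      C * ∫ x, |g x| ∂(μ (θ^[n] ω)) := by
  obtain ⟨hint, htransfer⟩ := integrable_Lrn_and_integral_eq hw hinv hfg n
  rw [Lrn_mul_comp_shift_iterate] at hint htransfer
  calc |∫ x, f x * g (shift^[n] x) ∂(μ ω) - m * ∫ x, g x ∂(μ (θ^[n] ω))|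
      = |∫ x, (Lrn θ W A φ ω n f x - m) * g x ∂(μ (θ^[n] ω))| := by
        rw [htransfer, ← integral_const_mul, ← integral_sub hint (hg.const_mul m)]
        simp only [sub_mul]
    _ ≤ ∫ x, C * |g x| ∂(μ (θ^[n] ω)) := by
        rw [← Real.norm_eq_abs]
        refine norm_integral_le_of_norm_le (hg.abs.const_mul C) ?_
        filter_upwards [hbound] with x hx
        rw [Real.norm_eq_abs, abs_mul]
        gcongr
    _ = C * ∫ x, |g x| ∂(μ (θ^[n] ω)) := integral_const_mul _ _

end Transfer

section DecayOfCorrelations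

variable {Ω : Type*} [MeasurableSpace Ω] {P : Measure Ω} {θ : Ω → Ω} {W : Ω → Set ℕ}
  {A : Ω → ℕ → ℕ → Prop} {φ : Ω → Seq → ℝ} {μ : Ω → Measure Seq}

theorem ae_measurePreserving_shift (hθ : Measure.QuasiMeasurePreserving θ P P)
    (hw : ∀ᵐ ω ∂P, Measurable (ruelleWeight θ W A φ ω))
    (hnorm : ∀ᵐ ω ∂P, ∀ x ∈ Xfib θ W A (θ ω), Lr θ W A φ ω (fun _ => 1) x = 1)
    (hμ : IsRandomProbMeasure θ W A P μ)
    (hμinv : ∀ᵐ ω ∂P, dualLr θ W A φ ω (μ (θ ω)) = μ ω) :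
    ∀ᵐ ω ∂P, MeasurePreserving shift (μ ω) (μ (θ ω)) := by
  filter_upwards [hw, hnorm, hμinv, hθ.ae hμ.ae_mem_Xfib] with ω hwω hone hinv hmem
  refine ⟨measurable_shift, ?_⟩
  rw [← hinv, map_shift_dualLr hwω (hmem.mono hone)]

theorem ae_abs_correlation_le (hθ : Measure.QuasiMeasurePreserving θ P P)
    (hw : ∀ᵐ ω ∂P, Measurable (ruelleWeight θ W A φ ω))
    (hnorm : ∀ᵐ ω ∂P, ∀ x ∈ Xfib θ W A (θ ω), Lr θ W A φ ω (fun _ => 1) x = 1)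
    (hμ : IsRandomProbMeasure θ W A P μ)
    (hμinv : ∀ᵐ ω ∂P, dualLr θ W A φ ω (μ (θ ω)) = μ ω)
    {f g : Ω → Seq → ℝ} (hf : ∀ᵐ ω ∂P, MemLp (f ω) ⊤ (μ ω))
    (hg : ∀ᵐ ω ∂P, Integrable (g ω) (μ ω)) :
    ∀ᵐ ω ∂P, ∀ (n : ℕ) (m C : ℝ),
      (∀ x ∈ Xfib θ W A (θ^[n] ω), |Lrn θ W A φ ω n (f ω) x - m| ≤ C) →
      |∫ x, f ω x * g (θ^[n] ω) (shift^[n] x) ∂(μ ω) -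
          m * ∫ x, g (θ^[n] ω) x ∂(μ (θ^[n] ω))| ≤
        C * ∫ x, |g (θ^[n] ω) x| ∂(μ (θ^[n] ω)) := by
  filter_upwards [ae_all_iterate hθ hw, ae_all_iterate hθ hμinv,
    ae_all_iterate hθ (ae_measurePreserving_shift hθ hw hnorm hμ hμinv), hf,
    ae_all_iterate hθ hg, ae_all_iterate hθ hμ.ae_mem_Xfib]
    with ω hwω hinv hshift hfω hgω hmem n m C hbound
  simp only [← Function.iterate_succ_apply' θ] at hinv hshift
  have hfg : Integrable (fun x => f ω x * g (θ^[n] ω) (shift^[n] x)) (μ ω) :=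
    ((measurePreserving_shift_iterate hshift n).integrable_comp_of_integrable
      (hgω n)).mul_of_top_right hfω
  exact abs_integral_mul_comp_shift_iterate_sub_le hwω hinv hfg (hgω n) ((hmem n).mono hbound)

theorem random_decay_of_correlations_general {θinv : Ω → Ω}
    (hθ : Measure.QuasiMeasurePreserving θ P P) (hθinv : Measure.QuasiMeasurePreserving θinv P P)
    (hinv : Function.RightInverse θinv θ)
    (hw : ∀ᵐ ω ∂P, Measurable (ruelleWeight θ W A φ ω))
    (hnorm : ∀ᵐ ω ∂P, ∀ x ∈ Xfib θ W A (θ ω), Lr θ W A φ ω (fun _ => 1) x = 1)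
    (hμ : IsRandomProbMeasure θ W A P μ)
    (hμinv : ∀ᵐ ω ∂P, dualLr θ W A φ ω (μ (θ ω)) = μ ω)
    {f g : Ω → Seq → ℝ} (hf : ∀ᵐ ω ∂P, MemLp (f ω) ⊤ (μ ω))
    (hg : ∀ᵐ ω ∂P, Integrable (g ω) (μ ω)) {l k : Ω → ℕ} {a b : Ω → ℝ}
    (hl : ∀ᵐ ω ∂P, ∀ x ∈ Xfib θ W A (θ^[l ω] ω),
      |Lrn θ W A φ ω (l ω) (f ω) x - ∫ y, f ω y ∂(μ ω)| ≤ a ω)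
    (hk : ∀ᵐ ω ∂P, ∀ x ∈ Xfib θ W A ω,
      |Lrn θ W A φ (θinv^[k ω] ω) (k ω) (f (θinv^[k ω] ω)) x -
        ∫ y, f (θinv^[k ω] ω) y ∂(μ (θinv^[k ω] ω))| ≤ b ω) :
    ∀ᵐ ω ∂P,
      |∫ x, f ω x * g (θ^[l ω] ω) (shift^[l ω] x) ∂(μ ω) -
          (∫ x, f ω x ∂(μ ω)) * ∫ x, g (θ^[l ω] ω) x ∂(μ (θ^[l ω] ω))| ≤
        a ω * ∫ x, |g (θ^[l ω] ω) x| ∂(μ (θ^[l ω] ω)) ∧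
      |∫ x, f (θinv^[k ω] ω) x * g ω (shift^[k ω] x) ∂(μ (θinv^[k ω] ω)) -
          (∫ x, f (θinv^[k ω] ω) x ∂(μ (θinv^[k ω] ω))) * ∫ x, g ω x ∂(μ ω)| ≤
        b ω * ∫ x, |g ω x| ∂(μ ω) := by
  have hcorr := ae_abs_correlation_le hθ hw hnorm hμ hμinv hf hg
  filter_upwards [hcorr, ae_all_iterate hθinv hcorr, hl, hk] with ω hfwd hbwd hlω hkω
  refine ⟨hfwd _ _ _ hlω, ?_⟩
  have hbwdω := hbwd (k ω) (k ω)
  rw [hinv.iterate (k ω) ω] at hbwdω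
  exact hbwdω _ _ hkω

end DecayOfCorrelations

/-- (Exponential decay of correlations.) Assume the b.i.p. property,
condition (Ĥ) and `ℒ_ω(1) = 1` a.s.; let `{μ_ω}` be the invariant random probability
measure and let `c`, `t`, `B_ω`, `(k_n(ω))`, `(l_n(ω))` be as in the Vasershtein
contraction corollary. Then for every fibrewise Lipschitz `f` with `∫ f dμ_ω = 0` a.s. and
every `g` with `∫|g| dμ_ω < ∞` a.s., the correlations `∫ f · (g∘T^{l_n(ω)}_ω) dμ_ω` and
`∫ f · (g∘T^{k_n(ω)}_{θ^{-k_n(ω)}ω}) dμ_{θ^{-k_n(ω)}ω}` decay like `2c t^n D(f) ∫|g|` and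
`4B_ω t^n D(f) ∫|g|`, respectively. -/
theorem random_decay_of_correlations
    {Ω : Type*} [MeasurableSpace Ω] (P : Measure Ω) [IsProbabilityMeasure P]
    (θ θinv : Ω → Ω) (hθ : Ergodic θ P) (hθinv : Measurable θinv)
    (hinv : ∀ ω, θinv (θ ω) = ω ∧ θ (θinv ω) = ω)
    (W : Ω → Set ℕ) (A : Ω → ℕ → ℕ → Prop)
    (hrow : ∀ ω, ∀ i ∈ W ω, ∃ j ∈ W (θ ω), A ω i j)
    (hcol : ∀ ω, ∀ i ∈ W (θ ω), ∃ j ∈ W ω, A ω j i)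
    (φ : Ω → Seq → ℝ) (r : ℝ) (hr : 0 < r ∧ r < 1)
    (bip : BIPData θ θinv W A P)
    -- condition (Ĥ)
    (κ : Ω → ℝ) (hκm : Measurable κ) (hκ0 : ∀ᵐ ω ∂P, 0 ≤ κ ω)
    (hκint : Integrable (fun ω => Real.log (κ ω)) P)
    (hφH : LocHolder2 θ W A P φ r κ)
    (hφ1 : Var1Fin θ W A P φ (bip.Ωbi ∪ bip.Ωbp))
    -- normalisation `ℒ_ω(1) = 1`
    (hnorm : ∀ᵐ ω ∂P, ∀ x ∈ Xfib θ W A (θ ω), Lr θ W A φ ω (fun _ => 1) x = 1)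
    -- the invariant random probability measure `{μ_ω}`
    (μ : Ω → Measure Seq) (hμ : IsRandomProbMeasure θ W A P μ)
    (hμinv : ∀ᵐ ω ∂P, dualLr θ W A φ ω (μ (θ ω)) = μ ω)
    -- the constants and random sequences of the Vasershtein contraction corollary
    (t c : ℝ) (ht : t ∈ Set.Ioo (0 : ℝ) 1) (hc : 0 < c) (kseq lseq : Ω → ℕ → ℕ)
    (hdec1 : ∀ f : Ω → Seq → ℝ, FibLip θ W A P r f → ∀ n : ℕ, 1 ≤ n → ∀ᵐ ω ∂P,
      ∀ x ∈ Xfib θ W A (θ^[lseq ω n] ω),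
        |Lrn θ W A φ ω (lseq ω n) (f ω) x - ∫ y, f ω y ∂(μ ω)| ≤
          2 * c * t ^ n * LipC (Xfib θ W A ω) (dr r) (f ω))
    (hdec2 : ∀ f : Ω → Seq → ℝ, FibLip θ W A P r f → ∀ n : ℕ, 1 ≤ n → ∀ᵐ ω ∂P,
      ∀ x ∈ Xfib θ W A ω,
        |Lrn θ W A φ (θinv^[kseq ω n] ω) (kseq ω n) (f (θinv^[kseq ω n] ω)) x -
            ∫ y, f (θinv^[kseq ω n] ω) y ∂(μ (θinv^[kseq ω n] ω))| ≤
          4 * Brand θinv κ r ω * t ^ n *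
            LipC (Xfib θ W A (θinv^[kseq ω n] ω)) (dr r) (f (θinv^[kseq ω n] ω))) :
    ∀ f : Ω → Seq → ℝ, FibLip θ W A P r f →
      (∀ᵐ ω ∂P, (∫ x, f ω x ∂(μ ω)) = 0) →
      ∀ g : Ω → Seq → ℝ, (∀ᵐ ω ∂P, Integrable (g ω) (μ ω)) →
      ∀ n : ℕ, 1 ≤ n → ∀ᵐ ω ∂P,
        |∫ x, f ω x * g (θ^[lseq ω n] ω) (shift^[lseq ω n] x) ∂(μ ω)| ≤
          2 * c * t ^ n * LipC (Xfib θ W A ω) (dr r) (f ω) *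
            ∫ x, |g (θ^[lseq ω n] ω) x| ∂(μ (θ^[lseq ω n] ω)) ∧
        |∫ x, f (θinv^[kseq ω n] ω) x * g ω (shift^[kseq ω n] x)
            ∂(μ (θinv^[kseq ω n] ω))| ≤
          4 * Brand θinv κ r ω * t ^ n *
            LipC (Xfib θ W A (θinv^[kseq ω n] ω)) (dr r) (f (θinv^[kseq ω n] ω)) *
            ∫ x, |g ω x| ∂(μ ω) := by
  intro f hf hf0 g hg n hn
  have hθinv' := measurePreserving_of_inverse hθ.toMeasurePreserving hθinv fun ω => (hinv ω).1
  filter_upwards [random_decay_of_correlations_general hθ.quasiMeasurePreserving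
    hθinv'.quasiMeasurePreserving (fun ω => (hinv ω).2)
    (hφH.ae_measurable_ruelleWeight hr.1.le hr.2) hnorm hμ hμinv (hf.ae_memLp_top hr.1.le hr.2 hμ)
    hg (hdec1 f hf n hn) (hdec2 f hf n hn),
    hf0, ae_all_iterate hθinv'.quasiMeasurePreserving hf0] with ω hcorr hzero hzero_back
  simpa only [hzero, hzero_back, zero_mul, sub_zero] using hcorr

end RTMC
end
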